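/- Let S = C[x_0,...,x_n,y_1,...,y_N], I = (y_1,...,y_N), R = S/I. Let M be a finitely generated graded R-module generated in positive degrees with strictly increasing maximal degree sequence (t_0, t_1, ..., t_r), r ≤ n+1, with minimal generator degree k = t_0, and suppose Σ_j β_{0,j}^R(M) ≤ binom(k+N−1, k). Then there exists a homogeneous ideal J ⊆ S with I^{k+1} ⊆ J ⊆ I^k, √J = I, whose maximal degree sequence as an S-module is (t_1, t_2, ..., t_r, t_r+1, t_r+2, ..., t_r+N). In particular reg_S(J) = reg_R(M) + 1. -/

import Mathlib

/-!
Write `R = ℂ[x]`, `S = ℂ[x, y]` and `I = (y)`. Let `E ⊆ F₀` be the first syzygy module of `M`, where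
`F₀` is the first module of the minimal resolution of `M`; it is resolved by the rest of that
resolution. Let `W ⊆ F₀ ⊗ S` be `E ⊗ S`.

* Extension of scalars is exact (`bcMap_exact`), so `W` has a minimal resolution over `S` with the
  same Betti numbers as `E`, and its top degrees are `t_1, …, t_r`. The variables `y` form a regular
  sequence on `W` (`mem_of_X_smul_mem`), so iterated mapping cones of multiplication by the `y`'s
  give a minimal resolution of `W/IW` (`hasRes_smul`). Each cone adds one step, whose top degree is
  one more than the previous one; since the `t_i` increase strictly, the other top degrees stay
  the same. They become `t_1, …, t_r, t_r + 1, …, t_r + N`.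
* By the bound on the number of generators, distinct monomials `y^α` of degree `k` can be assigned
  to the basis vectors of `F₀`. Sending a basis vector of degree `d` to `x_0^(d-k) y^α` defines a
  degree-preserving map `φ : F₀ ⊗ S → I^k`, and it induces an injection `W/IW → I^k/I^(k+1)`. The
  ideal is `J = φ(W) + I^(k+1)`, so that `J/I^(k+1) ≅ W/IW` (`exists_ideal`). The inclusions
  `I^(k+1) ⊆ J ⊆ I^k` hold by construction, and give `√J = I` because `I` is prime.
* `I^(k+1)` has a linear resolution, generated in degree `k + 1 + i` at step `i`
  (`hasRes_varIdeal_pow`). The generators of the resolution of `W/IW` at step `i` have degrees at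
  least `k + 1 + i`. Hence in the horseshoe resolution of `0 → I^(k+1) → J → W/IW → 0` the
  components linking the two parts go from generators at step `i + 1` to generators of strictly
  smaller degree at step `i`, so they have no constant entries: the resolution is minimal
  (`HasRes.ext`), and its top degrees are those of `W/IW`.

Resolutions are handled in coordinates: a graded free module is `ι → S` together with the degrees of
its basis vectors (`GC`, `HasRes`); `MinFreeRes.toGC` and `HasRes.exists_minFreeRes` translate.
-/

open MvPolynomial DirectSum

noncomputable section

/-- The standard graded polynomial ring `ℂ[x_1,…,x_m]`. -/
abbrev PolyS (m : ℕ) : Type := MvPolynomial (Fin m) ℂ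

/-- The degree-`e` homogeneous piece of the polynomial ring (zero for `e < 0`). -/
def hpiece (m : ℕ) (e : ℤ) : Submodule ℂ (PolyS m) :=
  if 0 ≤ e then homogeneousSubmodule (Fin m) ℂ e.toNat else ⊥

/-- The graded free module `⊕_j S(-j)^{b j}`. -/
abbrev FreeMod (m : ℕ) (b : ℤ → ℕ) : Type :=
  DirectSum ℤ (fun j : ℤ => Fin (b j) → PolyS m)

/-- The degree-`deg` homogeneous piece of the graded free module `⊕_j S(-j)^{b j}`. -/
def freePiece (m : ℕ) (b : ℤ → ℕ) (deg : ℤ) : Submodule ℂ (FreeMod m b) where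
  carrier := {x | ∀ (j : ℤ) (i : Fin (b j)), x j i ∈ hpiece m (deg - j)}
  add_mem' := by
    intro x y hx hy j i
    simp only [DirectSum.add_apply, Pi.add_apply]
    exact add_mem (hx j i) (hy j i)
  zero_mem' := by
    intro j i
    simp only [DirectSum.zero_apply, Pi.zero_apply]
    exact zero_mem _
  smul_mem' := by
    intro c x hx j i
    simp only [DirectSum.smul_apply, Pi.smul_apply]
    exact Submodule.smul_mem _ c (hx j i)

/-- The irrelevant maximal ideal `(x_1,…,x_m)`. -/
def mIdeal (m : ℕ) : Ideal (PolyS m) := Ideal.span (Set.range (X : Fin m → PolyS m))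

/-- A (ℤ-)grading on an `S`-module, compatible with the standard grading of `S`. -/
structure GradedSMod (m : ℕ) (M : Type) [AddCommGroup M] [Module ℂ M]
    [Module (PolyS m) M] [IsScalarTower ℂ (PolyS m) M] where
  piece : ℤ → Submodule ℂ M
  internal : DirectSum.IsInternal piece
  smul_mem : ∀ (d : ℕ) (p : PolyS m), p ∈ homogeneousSubmodule (Fin m) ℂ d →
    ∀ (j : ℤ) (x : M), x ∈ piece j → p • x ∈ piece (d + j)

/-- A minimal graded free resolution of a graded module `M`, recorded together with
its graded Betti numbers `b i j`. -/
structure MinFreeRes (m : ℕ) (M : Type) [AddCommGroup M] [Module ℂ M]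
    [Module (PolyS m) M] [IsScalarTower ℂ (PolyS m) M] (gM : GradedSMod m M) where
  b : ℕ → ℤ → ℕ
  bfin : ∀ i, (Function.support (b i)).Finite
  diff : ∀ i : ℕ, FreeMod m (b (i + 1)) →ₗ[PolyS m] FreeMod m (b i)
  aug : FreeMod m (b 0) →ₗ[PolyS m] M
  aug_surjective : Function.Surjective aug
  exact_aug : LinearMap.ker aug = LinearMap.range (diff 0)
  exact : ∀ i, LinearMap.ker (diff i) = LinearMap.range (diff (i + 1))
  graded_diff : ∀ (i : ℕ) (deg : ℤ) (x : FreeMod m (b (i + 1))),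
    x ∈ freePiece m (b (i + 1)) deg → diff i x ∈ freePiece m (b i) deg
  graded_aug : ∀ (deg : ℤ) (x : FreeMod m (b 0)),
    x ∈ freePiece m (b 0) deg → aug x ∈ gM.piece deg
  minimal : ∀ (i : ℕ) (x : FreeMod m (b (i + 1))),
    diff i x ∈ (mIdeal m) • (⊤ : Submodule (PolyS m) (FreeMod m (b i)))

/-- `tmax c` : the largest degree `j` with `c j ≠ 0` (the `i`-th entry of the maximal
degree sequence, when `c = b i`). -/
def tmax (c : ℤ → ℕ) : ℤ := sSup {j | c j ≠ 0}

/-- The Castelnuovo–Mumford regularity read off from a Betti table. -/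
def regOf (b : ℕ → ℤ → ℕ) : ℤ := sSup {z | ∃ i j, b i j ≠ 0 ∧ z = j - (i : ℤ)}


/-- The grading on (the underlying module of) a homogeneous ideal `J` induced from the
standard grading of the polynomial ring. -/
def NatIdealGrading (m : ℕ) (J : Ideal (PolyS m)) (g : GradedSMod m ↥J) : Prop :=
  ∀ (j : ℤ) (x : ↥J), x ∈ g.piece j ↔ (x : PolyS m) ∈ hpiece m j

/-- The ideal `I = (y_1,…,y_N)` inside `S = ℂ[x_0,…,x_n,y_1,…,y_N]`, where the last `N`
variables are the `y`'s. -/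
def yIdeal (n N : ℕ) : Ideal (PolyS (n + 1 + N)) :=
  Ideal.span {p | ∃ i : Fin (n + 1 + N), n + 1 ≤ (i : ℕ) ∧ p = X i}

/-- Cohen–Macaulayness of a module with minimal free resolution `F` of length `r`,
expressed through the standard characterization: `Ext^i(M, S) = 0` for `i < r = pd M`,
i.e. the dual of the minimal free resolution is exact except at the last spot. -/
def IsCMres (m : ℕ) {M : Type} [AddCommGroup M] [Module ℂ M]
    [Module (PolyS m) M] [IsScalarTower ℂ (PolyS m) M] {gM : GradedSMod m M}
    (F : MinFreeRes m M gM) (r : ℕ) : Prop :=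
  (0 < r → LinearMap.ker (F.diff 0).dualMap = ⊥) ∧
  ∀ i, i + 1 < r →
    LinearMap.ker ((F.diff (i + 1)).dualMap) = LinearMap.range ((F.diff i).dualMap)

/-- A bundled graded module over `ℂ[x_1,…,x_m]`. -/
structure GradedModuleBundle (m : ℕ) where
  carrier : Type
  [isAddCommGroup : AddCommGroup carrier]
  [isModC : Module ℂ carrier]
  [isModS : Module (PolyS m) carrier]
  [isTower : IsScalarTower ℂ (PolyS m) carrier]
  grading : GradedSMod m carrier

attribute [instance] GradedModuleBundle.isAddCommGroup GradedModuleBundle.isModC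
  GradedModuleBundle.isModS GradedModuleBundle.isTower

/-! ### Homogeneous polynomials and graded free modules -/

theorem mem_hpiece {m : ℕ} {e : ℤ} {p : PolyS m} :
    p ∈ hpiece m e ↔ ∀ s, coeff s p ≠ 0 → (s.degree : ℤ) = e := by
  unfold hpiece
  split_ifs with h
  · rw [mem_homogeneousSubmodule]
    constructor
    · intro hp s hs
      by_contra hne
      exact hs (hp.coeff_eq_zero (by omega))
    · intro hp s hs
      have := hp s hs
      have h1 : Finsupp.weight 1 s = s.degree := by
        rw [Finsupp.degree_eq_weight_one]; rfl
      rw [h1]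
      omega
  · rw [Submodule.mem_bot]
    constructor
    · rintro rfl s hs
      simp at hs
    · intro hp
      ext s
      by_contra hs
      have := hp s (by simpa using hs)
      omega

theorem monomial_mem_hpiece {m : ℕ} (s : Fin m →₀ ℕ) (c : ℂ) :
    (monomial s c : PolyS m) ∈ hpiece m s.degree := by
  rw [mem_hpiece]
  intro t ht
  rw [coeff_monomial] at ht
  split_ifs at ht with h
  · rw [h]
  · exact absurd rfl ht

theorem one_mem_hpiece {m : ℕ} : (1 : PolyS m) ∈ hpiece m 0 := by
  simpa using monomial_mem_hpiece (m := m) 0 1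

theorem X_mem_hpiece {m : ℕ} (i : Fin m) : (X i : PolyS m) ∈ hpiece m 1 := by
  simpa [X] using monomial_mem_hpiece (Finsupp.single i 1) 1

theorem hpiece_mul {m : ℕ} {a b : ℤ} {p q : PolyS m} (hp : p ∈ hpiece m a)
    (hq : q ∈ hpiece m b) : p * q ∈ hpiece m (a + b) := by
  rw [mem_hpiece] at *
  intro s hs
  rw [coeff_mul] at hs
  obtain ⟨x, hx, hne⟩ := Finset.exists_ne_zero_of_sum_ne_zero hs
  have h1 := hp x.1 (left_ne_zero_of_mul hne)
  have h2 := hq x.2 (right_ne_zero_of_mul hne)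
  rw [Finset.HasAntidiagonal.mem_antidiagonal] at hx
  rw [← hx, map_add]
  push_cast
  rw [h1, h2]

/-- The degree-`z` homogeneous component of a polynomial, zero for `z < 0`. -/
def hcomp (m : ℕ) (z : ℤ) : PolyS m →ₗ[ℂ] PolyS m :=
  if 0 ≤ z then homogeneousComponent z.toNat else 0

theorem coeff_hcomp {m : ℕ} (z : ℤ) (p : PolyS m) (s : Fin m →₀ ℕ) :
    coeff s (hcomp m z p) = if (s.degree : ℤ) = z then coeff s p else 0 := by
  unfold hcomp
  split_ifs with h h' h'
  · rw [coeff_homogeneousComponent, if_pos (by omega)]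
  · rw [coeff_homogeneousComponent, if_neg (by omega)]
  · omega
  · simp

theorem hcomp_mem {m : ℕ} (z : ℤ) (p : PolyS m) : hcomp m z p ∈ hpiece m z := by
  rw [mem_hpiece]
  intro s hs
  rw [coeff_hcomp] at hs
  by_contra h
  simp [h] at hs

theorem hcomp_of_mem {m : ℕ} {z w : ℤ} {p : PolyS m} (hp : p ∈ hpiece m w) :
    hcomp m z p = if w = z then p else 0 := by
  rw [mem_hpiece] at hp
  ext s
  rw [coeff_hcomp]
  by_cases hs : coeff s p = 0
  · split_ifs <;> simp [hs]
  · rw [hp s hs]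
    split_ifs <;> simp

/-- A vector of the graded free module with basis in degrees `δ` is homogeneous of degree `e`. -/
def Homog {m : ℕ} {ι : Type} (δ : ι → ℤ) (e : ℤ) (x : ι → PolyS m) : Prop :=
  ∀ a, x a ∈ hpiece m (e - δ a)

/-- A linear map between graded free modules preserves degrees. -/
def IsGr {m : ℕ} {ι κ : Type} (δ : ι → ℤ) (ε : κ → ℤ)
    (f : (ι → PolyS m) →ₗ[PolyS m] (κ → PolyS m)) : Prop :=
  ∀ e x, Homog δ e x → Homog ε e (f x)

/-- The degree-`e` component of a vector of the graded free module with basis in degrees `δ`. -/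
def vcomp {m : ℕ} {ι : Type} (δ : ι → ℤ) (e : ℤ) : (ι → PolyS m) →ₗ[ℂ] (ι → PolyS m) :=
  LinearMap.pi fun a => hcomp m (e - δ a) ∘ₗ LinearMap.proj a

theorem vcomp_apply {m : ℕ} {ι : Type} (δ : ι → ℤ) (e : ℤ) (x : ι → PolyS m) (a : ι) :
    vcomp δ e x a = hcomp m (e - δ a) (x a) := rfl

theorem vcomp_homog {m : ℕ} {ι : Type} (δ : ι → ℤ) (e : ℤ) (x : ι → PolyS m) :
    Homog δ e (vcomp δ e x) := fun _ => hcomp_mem _ _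

theorem vcomp_of_homog {m : ℕ} {ι : Type} {δ : ι → ℤ} {e w : ℤ} {x : ι → PolyS m}
    (hx : Homog δ w x) : vcomp δ e x = if w = e then x else 0 := by
  ext1 a
  rw [vcomp_apply, hcomp_of_mem (hx a)]
  by_cases h : w = e
  · simp [h]
  · rw [if_neg h, if_neg (by omega)]
    rfl

theorem Homog.sub {m : ℕ} {ι : Type} {δ : ι → ℤ} {e : ℤ} {x y : ι → PolyS m}
    (hx : Homog δ e x) (hy : Homog δ e y) : Homog δ e (x - y) :=
  fun a => Submodule.sub_mem _ (hx a) (hy a)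

theorem Homog.add {m : ℕ} {ι : Type} {δ : ι → ℤ} {e : ℤ} {x y : ι → PolyS m}
    (hx : Homog δ e x) (hy : Homog δ e y) : Homog δ e (x + y) :=
  fun a => Submodule.add_mem _ (hx a) (hy a)

theorem Homog.neg {m : ℕ} {ι : Type} {δ : ι → ℤ} {e : ℤ} {x : ι → PolyS m}
    (hx : Homog δ e x) : Homog δ e (-x) :=
  fun a => Submodule.neg_mem _ (hx a)

theorem homog_single {m : ℕ} {ι : Type} [DecidableEq ι] {δ : ι → ℤ} (a : ι) {p : PolyS m} {z : ℤ}
    (hp : p ∈ hpiece m z) : Homog δ (z + δ a) (Pi.single a p) := by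
  intro b
  by_cases h : b = a
  · subst h
    simpa using hp
  · simp [h]

/-- Degree-preserving maps commute with taking homogeneous components. -/
theorem IsGr.vcomp_comm {m : ℕ} {ι κ : Type} [Finite ι] {δ : ι → ℤ} {ε : κ → ℤ}
    {f : (ι → PolyS m) →ₗ[PolyS m] (κ → PolyS m)} (hf : IsGr δ ε f) (e : ℤ) (x : ι → PolyS m) :
    vcomp ε e (f x) = f (vcomp δ e x) := by
  classical
  suffices h : vcomp ε e ∘ₗ f.restrictScalars ℂ = f.restrictScalars ℂ ∘ₗ vcomp δ e from
    LinearMap.congr_fun h x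
  refine LinearMap.pi_ext fun a p => ?_
  simp only [LinearMap.comp_apply, LinearMap.restrictScalars_apply]
  induction p using MvPolynomial.induction_on' with
  | monomial s c =>
    have h := homog_single (δ := δ) a (monomial_mem_hpiece s c)
    rw [vcomp_of_homog h, vcomp_of_homog (hf _ _ h)]
    split_ifs <;> simp
  | add p q ihp ihq =>
    rw [Pi.single_add, map_add, map_add, map_add, map_add, ihp, ihq]

/-- A homogeneous vector in the image of a degree-preserving map has a homogeneous preimage. -/
theorem IsGr.exists_homog {m : ℕ} {ι κ : Type} [Finite ι] {δ : ι → ℤ} {ε : κ → ℤ}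
    {f : (ι → PolyS m) →ₗ[PolyS m] (κ → PolyS m)} (hf : IsGr δ ε f) {e : ℤ} {x : ι → PolyS m}
    (hx : Homog ε e (f x)) : ∃ y, Homog δ e y ∧ f y = f x :=
  ⟨vcomp δ e x, vcomp_homog _ _ _, by
    rw [← hf.vcomp_comm, vcomp_of_homog hx, if_pos rfl]⟩

/-- A degree-preserving map out of a free module lifts along a degree-preserving map whose image
contains its image. -/
theorem IsGr.lift {m : ℕ} {ι κ μ : Type} [Finite ι] [Finite κ] {δ : ι → ℤ} {ε : κ → ℤ} {ζ : μ → ℤ}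
    {h : (κ → PolyS m) →ₗ[PolyS m] (μ → PolyS m)} (hh : IsGr ε ζ h)
    {φ : (ι → PolyS m) →ₗ[PolyS m] (μ → PolyS m)} (hφ : IsGr δ ζ φ)
    (hr : ∀ x, ∃ y, h y = φ x) :
    ∃ ψ : (ι → PolyS m) →ₗ[PolyS m] (κ → PolyS m), IsGr δ ε ψ ∧ ∀ x, h (ψ x) = φ x := by
  classical
  have := Fintype.ofFinite ι
  have key : ∀ a : ι, ∃ w, Homog ε (δ a) w ∧ h w = φ (Pi.single a 1) := by
    intro a
    obtain ⟨y, hy⟩ := hr (Pi.single a 1)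
    have h1 := homog_single (δ := δ) a (p := (1 : PolyS m)) (z := 0) one_mem_hpiece
    rw [zero_add] at h1
    have h2 := hφ _ _ h1
    rw [← hy] at h2
    obtain ⟨w, hw, hw'⟩ := hh.exists_homog h2
    exact ⟨w, hw, hw'.trans hy⟩
  choose w hw hw' using key
  have happ : ∀ x, Fintype.linearCombination (PolyS m) w x = ∑ a, x a • w a := fun x => rfl
  refine ⟨Fintype.linearCombination (PolyS m) w, ?_, ?_⟩
  · intro e x hx b
    rw [happ, Finset.sum_apply]
    refine Submodule.sum_mem _ fun a _ => ?_
    have := hpiece_mul (hx a) (hw a b)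
    rw [sub_add_sub_cancel] at this
    exact this
  · intro x
    rw [happ, map_sum]
    simp only [map_smul, hw']
    conv_rhs => rw [pi_eq_sum_univ x, map_sum]
    refine Finset.sum_congr rfl fun a _ => ?_
    rw [← map_smul]
    congr 1
    ext1 b
    simp [Pi.single_apply, eq_comm]

theorem constantCoeff_of_pos {m : ℕ} {e : ℤ} {p : PolyS m} (hp : p ∈ hpiece m e) (he : e ≠ 0) :
    constantCoeff p = 0 := by
  by_contra h
  apply he
  rw [← mem_hpiece.1 hp 0 h]
  simp

/-! ### Complexes of graded free modules and mapping cones -/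

/-- A complex `⋯ → G₂ → G₁ → G₀` of finitely generated graded free modules with degree-preserving
differentials which is exact at every `G_i` with `i ≥ 1`. The module `G_i` is free on the finite
type `ι i`, with the basis vector `a` in degree `deg i a`. -/
structure GC (m : ℕ) where
  ι : ℕ → Type
  fin : ∀ i, Finite (ι i)
  deg : ∀ i, ι i → ℤ
  d : ∀ i, (ι (i + 1) → PolyS m) →ₗ[PolyS m] (ι i → PolyS m)
  gr : ∀ i, IsGr (deg (i + 1)) (deg i) (d i)
  exact : ∀ i x, d i x = 0 ↔ ∃ y, d (i + 1) y = x

attribute [instance] GC.fin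

/-- The differentials `G_{i+1} → G_i` with `i ≥ k` have all their entries in the maximal ideal. -/
def GC.MinFrom {m : ℕ} (G : GC m) (k : ℕ) : Prop :=
  ∀ i, k ≤ i → ∀ x b, constantCoeff (G.d i x b) = 0

theorem GC.d_d {m : ℕ} (G : GC m) (i : ℕ) (x) : G.d i (G.d (i + 1) x) = 0 :=
  (G.exact i _).2 ⟨x, rfl⟩

/-- The complex with its `0`-th module dropped. -/
def GC.shift {m : ℕ} (G : GC m) : GC m where
  ι i := G.ι (i + 1)
  fin i := G.fin (i + 1)
  deg i := G.deg (i + 1)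
  d i := G.d (i + 1)
  gr i := G.gr (i + 1)
  exact i := G.exact (i + 1)

/-- The comparison theorem: a degree-preserving map `P₀ ← Q₀` compatible with the images of the
first differentials extends to a chain map. -/
theorem GC.exists_lift {m : ℕ} (P Q : GC m)
    (f₀ : (Q.ι 0 → PolyS m) →ₗ[PolyS m] (P.ι 0 → PolyS m)) (hf₀ : IsGr (Q.deg 0) (P.deg 0) f₀)
    (hr : ∀ x, ∃ y, P.d 0 y = f₀ (Q.d 0 x)) :
    ∃ f : ∀ i, (Q.ι i → PolyS m) →ₗ[PolyS m] (P.ι i → PolyS m), f 0 = f₀ ∧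
      (∀ i, IsGr (Q.deg i) (P.deg i) (f i)) ∧
      ∀ i x, P.d i (f (i + 1) x) = f i (Q.d i x) := by
  let T (i : ℕ) : Type := {g : (Q.ι i → PolyS m) →ₗ[PolyS m] (P.ι i → PolyS m) //
    IsGr (Q.deg i) (P.deg i) g ∧ ∀ x, ∃ y, P.d i y = g (Q.d i x)}
  have step : ∀ i (g : T i), ∃ g' : T (i + 1), ∀ x, P.d i (g'.1 x) = g.1 (Q.d i x) := by
    intro i g
    obtain ⟨ψ, hψ, hψ'⟩ := (P.gr i).lift (φ := g.1 ∘ₗ Q.d i)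
      (fun e x hx => g.2.1 _ _ (Q.gr i _ _ hx)) g.2.2
    refine ⟨⟨ψ, hψ, fun x => (P.exact i _).1 ?_⟩, hψ'⟩
    rw [hψ', LinearMap.comp_apply, Q.d_d, map_zero]
  choose nxt hnxt using step
  let F : ∀ i, T i := fun i => Nat.rec ⟨f₀, hf₀, hr⟩ (fun i g => nxt i g) i
  exact ⟨fun i => (F i).1, rfl, fun i => (F i).2.1, fun i x => hnxt i (F i) x⟩

/-- Index types of the mapping cone. -/
def coneι (A B : ℕ → Type) : ℕ → Type
  | 0 => A 0
  | i + 1 => A (i + 1) ⊕ B i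

/-- Degrees of the basis vectors of the mapping cone. -/
def coneDeg {A B : ℕ → Type} (α : ∀ i, A i → ℤ) (β : ∀ i, B i → ℤ) : ∀ i, coneι A B i → ℤ
  | 0 => α 0
  | i + 1 => Sum.elim (α (i + 1)) (β i)

/-- Projection of a direct sum of free modules to the first summand. -/
abbrev fstL (m : ℕ) (A B : Type) : (A ⊕ B → PolyS m) →ₗ[PolyS m] (A → PolyS m) :=
  LinearMap.funLeft _ _ Sum.inl

/-- Projection of a direct sum of free modules to the second summand. -/
abbrev sndL (m : ℕ) (A B : Type) : (A ⊕ B → PolyS m) →ₗ[PolyS m] (B → PolyS m) :=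
  LinearMap.funLeft _ _ Sum.inr

/-- The map into a direct sum of free modules with given components. -/
def pairL {m : ℕ} {A B C : Type} (f : (C → PolyS m) →ₗ[PolyS m] (A → PolyS m))
    (g : (C → PolyS m) →ₗ[PolyS m] (B → PolyS m)) :
    (C → PolyS m) →ₗ[PolyS m] (A ⊕ B → PolyS m) where
  toFun x := Sum.elim (f x) (g x)
  map_add' x y := by ext1 (a | a) <;> simp
  map_smul' c x := by ext1 (a | a) <;> simp

/-- Differential of the mapping cone of `f : Q → P`. -/
def coneD {m : ℕ} (P Q : GC m) (f : ∀ i, (Q.ι i → PolyS m) →ₗ[PolyS m] (P.ι i → PolyS m)) :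
    ∀ i, (coneι P.ι Q.ι (i + 1) → PolyS m) →ₗ[PolyS m] (coneι P.ι Q.ι i → PolyS m)
  | 0 => P.d 0 ∘ₗ fstL m _ _ + f 0 ∘ₗ sndL m _ _
  | i + 1 => pairL (P.d (i + 1) ∘ₗ fstL m _ _ + f (i + 1) ∘ₗ sndL m _ _)
      (-(Q.d i ∘ₗ sndL m _ _))

/-- The mapping cone of a chain map which is injective on cokernels of the first differentials. -/
def GC.cone {m : ℕ} (P Q : GC m) (f : ∀ i, (Q.ι i → PolyS m) →ₗ[PolyS m] (P.ι i → PolyS m))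
    (hgr : ∀ i, IsGr (Q.deg i) (P.deg i) (f i))
    (hf : ∀ i x, P.d i (f (i + 1) x) = f i (Q.d i x))
    (hinj : ∀ x y, f 0 x = P.d 0 y → ∃ z, Q.d 0 z = x) : GC m where
  ι := coneι P.ι Q.ι
  fin i := match i with
    | 0 => P.fin 0
    | i + 1 => have := P.fin (i + 1); have := Q.fin i; inferInstanceAs (Finite (P.ι (i + 1) ⊕ Q.ι i))
  deg := coneDeg P.deg Q.deg
  d := coneD P Q f
  gr i := match i with
    | 0 => fun e x hx => (P.gr 0 e _ fun a => hx (Sum.inl a)).add (hgr 0 e _ fun a => hx (Sum.inr a))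
    | i + 1 => fun e x hx b => match b with
      | Sum.inl b => (P.gr (i + 1) e _ fun a => hx (Sum.inl a)).add
          (hgr (i + 1) e _ fun a => hx (Sum.inr a)) b
      | Sum.inr b => (Q.gr i e _ fun a => hx (Sum.inr a)).neg b
  exact i x := by
    have elim : ∀ {A B : Type} (y : A ⊕ B → PolyS m) u v, y ∘ Sum.inl = u → y ∘ Sum.inr = v →
        Sum.elim u v = y := by
      rintro A B y u v rfl rfl
      exact Sum.elim_comp_inl_inr y
    constructor
    · intro h
      have hQ : ∃ z, Q.d i z = x ∘ Sum.inr ∧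
          P.d i (x ∘ Sum.inl) + f i (x ∘ Sum.inr) = 0 := by
        cases i with
        | zero =>
          have h0 : P.d 0 (x ∘ Sum.inl) + f 0 (x ∘ Sum.inr) = 0 := h
          obtain ⟨z, hz⟩ := hinj (x ∘ Sum.inr) (-(x ∘ Sum.inl)) (by
            rw [map_neg]; exact eq_neg_of_add_eq_zero_right h0)
          exact ⟨z, hz, h0⟩
        | succ i =>
          have h1 : P.d (i + 1) (x ∘ Sum.inl) + f (i + 1) (x ∘ Sum.inr) = 0 :=
            funext fun a => congrFun h (Sum.inl a)
          have h2 : - Q.d i (x ∘ Sum.inr) = 0 := funext fun a => congrFun h (Sum.inr a)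
          obtain ⟨z, hz⟩ := (Q.exact i _).1 (neg_eq_zero.1 h2)
          exact ⟨z, hz, h1⟩
      obtain ⟨z, hz, h1⟩ := hQ
      rw [← hz, ← hf, ← map_add] at h1
      obtain ⟨w, hw⟩ := (P.exact i _).1 h1
      refine ⟨Sum.elim w (-z), elim _ _ _ ?_ ?_⟩
      · change x ∘ Sum.inl = P.d (i + 1) w + f (i + 1) (-z)
        rw [hw, map_neg, add_neg_cancel_right]
      · change x ∘ Sum.inr = - Q.d i (-z)
        rw [map_neg, neg_neg, hz]
    · rintro ⟨y, rfl⟩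
      have h1 : P.d i (P.d (i + 1) (y ∘ Sum.inl) + f (i + 1) (y ∘ Sum.inr)) +
          f i (-(Q.d i (y ∘ Sum.inr))) = 0 := by
        rw [map_add, P.d_d, hf, zero_add, map_neg, add_neg_cancel]
      cases i with
      | zero => exact h1
      | succ i =>
        funext b
        match b with
        | Sum.inl b => exact congrFun h1 b
        | Sum.inr b =>
          have h2 : - Q.d i (-(Q.d (i + 1) (y ∘ Sum.inr))) = 0 := by
            rw [map_neg, Q.d_d, neg_zero, neg_zero]
          exact congrFun h2 b

/-! ### Minimal resolutions of subquotients of free modules -/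

theorem constantCoeff_add_eq_zero {m : ℕ} {p q : PolyS m} (hp : constantCoeff p = 0)
    (hq : constantCoeff q = 0) : constantCoeff (p + q) = 0 := by
  rw [map_add, hp, hq, add_zero]

theorem constantCoeff_neg_eq_zero {m : ℕ} {p : PolyS m} (hp : constantCoeff p = 0) :
    constantCoeff (-p) = 0 := by
  rw [map_neg, hp, neg_zero]

theorem constantCoeff_X_mul {m : ℕ} (y : Fin m) (p : PolyS m) :
    constantCoeff (X y * p) = 0 := by
  rw [map_mul, constantCoeff_X, zero_mul]

/-- A degree-preserving map is minimal when the generators of its source have degrees larger than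
those of its target. -/
theorem IsGr.constantCoeff_apply {m : ℕ} {ι κ : Type} [Finite ι] {δ : ι → ℤ} {ε : κ → ℤ}
    {f : (ι → PolyS m) →ₗ[PolyS m] (κ → PolyS m)} (hf : IsGr δ ε f) {b : κ}
    (hb : ∀ a, ε b < δ a) (x : ι → PolyS m) : constantCoeff (f x b) = 0 := by
  classical
  have := Fintype.ofFinite ι
  rw [pi_eq_sum_univ x, map_sum, Finset.sum_apply, map_sum]
  refine Finset.sum_eq_zero fun a _ => ?_
  rw [map_smul, Pi.smul_apply, smul_eq_mul, map_mul]
  have h1 := homog_single (δ := δ) a (one_mem_hpiece (m := m))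
  have h2 : (fun j => if a = j then (1 : PolyS m) else 0) = Pi.single a 1 := by
    ext1 j
    simp [Pi.single_apply, eq_comm]
  rw [h2, constantCoeff_of_pos (hf _ _ h1 b), mul_zero]
  have := hb a
  omega

/-- The complex with all degrees raised by one. -/
def GC.twist {m : ℕ} (G : GC m) : GC m where
  ι := G.ι
  fin := G.fin
  deg i a := G.deg i a + 1
  d := G.d
  gr i e x hx b := by
    have := G.gr i (e - 1) x (fun a => by have := hx a; rwa [sub_sub, add_comm (1 : ℤ)]) b
    rwa [sub_sub, add_comm (1 : ℤ)] at this
  exact := G.exact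

/-- `A/B`, for submodules `A` and `B` of the graded free module with basis in degrees `δ`, has a
minimal graded free resolution whose `i`-th module is generated in exactly the degrees `D i`. The
augmentation is given as a map to the free module whose image together with `B` spans `A`. -/
def HasRes {m : ℕ} {κ : Type} (δ : κ → ℤ) (A B : Submodule (PolyS m) (κ → PolyS m))
    (D : ℕ → Set ℤ) : Prop :=
  ∃ (G : GC m) (ε : (G.ι 0 → PolyS m) →ₗ[PolyS m] (κ → PolyS m)),
    G.MinFrom 0 ∧ IsGr (G.deg 0) δ ε ∧ LinearMap.range ε ⊔ B = A ∧
    (∀ x, ε x ∈ B ↔ ∃ y, G.d 0 y = x) ∧ ∀ i, Set.range (G.deg i) = D i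

/-- The degrees of the generators of the cone of multiplication by a variable on a resolution with
generators in degrees `D`. -/
def coneSet (D : ℕ → Set ℤ) : ℕ → Set ℤ
  | 0 => D 0
  | i + 1 => D (i + 1) ∪ (· + 1) '' D i

theorem IsGr.X_smul {m : ℕ} {ι κ : Type} {δ : ι → ℤ} {ε : κ → ℤ}
    {f : (ι → PolyS m) →ₗ[PolyS m] (κ → PolyS m)} (hf : IsGr δ ε f) (y : Fin m) :
    IsGr (fun a => δ a + 1) ε ((X y : PolyS m) • f) := by
  intro e x hx b
  have := hpiece_mul (X_mem_hpiece y) (hf (e - 1) x (fun a => by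
    have := hx a; rwa [sub_sub, add_comm (1 : ℤ)]) b)
  rwa [show 1 + (e - 1 - ε b) = e - ε b by ring] at this

/-- If the variable `y` is a nonzerodivisor on `A/B`, the cone of multiplication by `y` on a
resolution of `A/B` resolves `A/(B + yA)`. -/
theorem HasRes.quot {m : ℕ} {κ : Type} {δ : κ → ℤ} {A B : Submodule (PolyS m) (κ → PolyS m)}
    {D : ℕ → Set ℤ} (h : HasRes δ A B D) (y : Fin m)
    (hy : ∀ v ∈ A, (X y : PolyS m) • v ∈ B → v ∈ B) :
    HasRes δ A (B ⊔ A.map (LinearMap.lsmul (PolyS m) _ (X y))) (coneSet D) := by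
  obtain ⟨G, ε, hmin, hgr, hA, hB, hD⟩ := h
  have hBA : B ≤ A := hA ▸ le_sup_right
  have hεA : ∀ x, ε x ∈ A := fun x => hA ▸ Submodule.mem_sup_left ⟨x, rfl⟩
  have hsup : LinearMap.range ε ⊔ (B ⊔ A.map (LinearMap.lsmul (PolyS m) _ (X y))) = A := by
    rw [← sup_assoc, hA, sup_eq_left]
    rintro _ ⟨v, hv, rfl⟩
    exact A.smul_mem _ hv
  have hker : ∀ x, ε x ∈ B ⊔ A.map (LinearMap.lsmul (PolyS m) _ (X y)) ↔
      ∃ w u, G.d 0 w + (X y : PolyS m) • u = x := by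
    intro x
    constructor
    · intro hx
      obtain ⟨b, hb, _, ⟨v, hv, rfl⟩, hbv⟩ := Submodule.mem_sup.1 hx
      rw [SetLike.mem_coe, ← hA] at hv
      obtain ⟨_, ⟨u, rfl⟩, b', hb', rfl⟩ := Submodule.mem_sup.1 hv
      obtain ⟨w, hw⟩ := (hB (x - (X y : PolyS m) • u)).1 (by
        rw [map_sub, map_smul, ← hbv]
        have : b + (LinearMap.lsmul (PolyS m) (κ → PolyS m) (X y)) (ε u + b') - (X y : PolyS m) • ε u
          = b + (X y : PolyS m) • b' := by
          rw [LinearMap.lsmul_apply, smul_add]; abel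
        rw [this]
        exact B.add_mem hb (B.smul_mem _ hb'))
      exact ⟨w, u, by rw [hw, sub_add_cancel]⟩
    · rintro ⟨w, u, rfl⟩
      rw [map_add, map_smul]
      exact Submodule.add_mem_sup ((hB _).2 ⟨_, rfl⟩) ⟨_, hεA _, rfl⟩
  refine ⟨G.cone G.twist (fun i => (X y : PolyS m) • LinearMap.id) (fun i => ?_) (fun i x => ?_)
    (fun x z hx => ?_), ε, ?_, hgr, ?_, fun x => ?_, fun i => ?_⟩
  · exact IsGr.X_smul (fun e x hx => hx) y
  · exact map_smul (G.d i) _ _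
  · refine (hB x).1 (hy _ (hεA x) ?_)
    have h1 := (hB ((X y : PolyS m) • x)).2 ⟨z, hx.symm⟩
    have h2 : ε ((X y : PolyS m) • x) = (X y : PolyS m) • ε x := map_smul ε _ _
    rwa [h2] at h1
  · intro i _ x b
    cases i with
    | zero => exact constantCoeff_add_eq_zero (hmin 0 le_rfl _ b) (constantCoeff_X_mul y _)
    | succ i =>
      match b with
      | Sum.inl b =>
        exact constantCoeff_add_eq_zero (hmin _ (Nat.zero_le _) _ b) (constantCoeff_X_mul y _)
      | Sum.inr b => exact constantCoeff_neg_eq_zero (hmin _ (Nat.zero_le _) _ b)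
  · exact hsup
  · refine (hker x).trans ⟨?_, ?_⟩
    · rintro ⟨w, u, h⟩
      exact ⟨(Sum.elim w u : G.ι 1 ⊕ G.ι 0 → PolyS m), h⟩
    · rintro ⟨z, h⟩
      exact ⟨fun a => z (Sum.inl a), fun a => z (Sum.inr a), h⟩
  · cases i with
    | zero => exact hD 0
    | succ i =>
      change Set.range (Sum.elim _ _) = D (i + 1) ∪ _
      rw [Set.Sum.elim_range, hD, ← hD i, ← Set.range_comp]
      rfl

/-- The complex obtained by putting the target of an exact augmentation in front. -/
def GC.aug {m : ℕ} (G : GC m) {κ : Type} [Finite κ] (δ : κ → ℤ)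
    (ε : (G.ι 0 → PolyS m) →ₗ[PolyS m] (κ → PolyS m)) (hε : IsGr (G.deg 0) δ ε)
    (hex : ∀ x, ε x = 0 ↔ ∃ y, G.d 0 y = x) : GC m where
  ι i := match i with
    | 0 => κ
    | i + 1 => G.ι i
  fin i := match i with
    | 0 => inferInstanceAs (Finite κ)
    | i + 1 => G.fin i
  deg i := match i with
    | 0 => δ
    | i + 1 => G.deg i
  d i := match i with
    | 0 => ε
    | i + 1 => G.d i
  gr i := match i with
    | 0 => hε
    | i + 1 => G.gr i
  exact i := match i with
    | 0 => hex
    | i + 1 => G.exact i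

/-- The horseshoe lemma for `0 → B → A → A/B → 0`, when in the resolution of `A/B` the generators
at each step have degrees larger than those of the generators of the resolution of `B` one step
before: the resolution obtained is then minimal for degree reasons. -/
theorem HasRes.ext {m : ℕ} {κ : Type} [Finite κ] {δ : κ → ℤ}
    {A B : Submodule (PolyS m) (κ → PolyS m)} {D D' : ℕ → Set ℤ}
    (hB : HasRes δ B ⊥ D) (hA : HasRes δ A B D')
    (hgap : ∀ i, ∀ p ∈ D i, ∀ q ∈ D' (i + 1), p < q) :
    HasRes δ A ⊥ (fun i => D i ∪ D' i) := by
  obtain ⟨P, ε, hmin, hgr, hA1, hB1, hD⟩ := hB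
  obtain ⟨Q, γ, hmin', hgr', hA2, hB2, hD'⟩ := hA
  simp only [Submodule.mem_bot] at hB1
  rw [sup_bot_eq] at hA1
  have hB1' : ∀ v, v ∈ B ↔ ∃ x, ε x = v := fun v => hA1 ▸ Iff.rfl
  obtain ⟨f, hf0, hfgr, hf⟩ := (P.aug δ ε hgr hB1).exists_lift Q γ hgr' (fun x => by
    exact (hB1' _).1 ((hB2 _).2 ⟨x, rfl⟩))
  let C := (P.aug δ ε hgr hB1).cone Q f hfgr hf (fun x y hxy => by
    rw [hf0] at hxy
    exact (hB2 x).1 (hxy ▸ (hB1' _).2 ⟨y, rfl⟩))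
  refine ⟨C.shift, C.d 0, ?_, C.gr 0, ?_, fun x => ?_, fun i => ?_⟩
  · intro i _ x b
    match b with
    | Sum.inl b =>
      refine constantCoeff_add_eq_zero (hmin i (Nat.zero_le _) _ b)
        ((hfgr (i + 1)).constantCoeff_apply (fun a => ?_) _)
      exact hgap i _ (hD i ▸ ⟨b, rfl⟩) _ (hD' (i + 1) ▸ ⟨a, rfl⟩)
    | Sum.inr b => exact constantCoeff_neg_eq_zero (hmin' i (Nat.zero_le _) _ b)
  · have hC : ∀ (u : P.ι 0 → PolyS m) (v : Q.ι 0 → PolyS m),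
        C.d 0 (Sum.elim u v : P.ι 0 ⊕ Q.ι 0 → PolyS m) = (ε u + γ v : κ → PolyS m) := by
      intro u v
      rw [← hf0]
      rfl
    rw [sup_bot_eq, ← hA2, ← hA1]
    apply le_antisymm
    · rintro _ ⟨x, rfl⟩
      have h1 := hC (fun a => x (Sum.inl a)) (fun a => x (Sum.inr a))
      rw [sup_comm]
      have h2 := Submodule.add_mem_sup (LinearMap.mem_range_self ε (fun a => x (Sum.inl a)))
        (LinearMap.mem_range_self γ (fun a => x (Sum.inr a)))
      rw [← h1] at h2
      have h3 : (Sum.elim (fun a => x (Sum.inl a)) (fun a => x (Sum.inr a)) :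
        P.ι 0 ⊕ Q.ι 0 → PolyS m) = x := Sum.elim_comp_inl_inr _
      rw [h3] at h2
      exact h2
    · refine sup_le ?_ ?_
      · rintro _ ⟨x, rfl⟩
        exact ⟨_, (hC 0 x).trans (by rw [map_zero, zero_add])⟩
      · rintro _ ⟨x, rfl⟩
        exact ⟨_, (hC x 0).trans (by rw [map_zero, add_zero])⟩
  · rw [Submodule.mem_bot]
    exact C.exact 0 x
  · change Set.range (Sum.elim _ _) = _
    rw [Set.Sum.elim_range]
    exact congrArg₂ _ (hD i) (hD' i)

/-- A degree-preserving map inducing an isomorphism from `A/B` to `(φ(A) + B')/B'` transports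
resolutions. -/
theorem HasRes.map {m : ℕ} {κ μ : Type} {δ : κ → ℤ} {ζ : μ → ℤ}
    {A B : Submodule (PolyS m) (κ → PolyS m)} {D : ℕ → Set ℤ} (h : HasRes δ A B D)
    (φ : (κ → PolyS m) →ₗ[PolyS m] (μ → PolyS m)) (hφ : IsGr δ ζ φ)
    (B' : Submodule (PolyS m) (μ → PolyS m)) (hB' : ∀ v ∈ A, φ v ∈ B' ↔ v ∈ B) :
    HasRes ζ (A.map φ ⊔ B') B' D := by
  obtain ⟨G, ε, hmin, hgr, hA, hB, hD⟩ := h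
  have hBA : B ≤ A := hA ▸ le_sup_right
  have hεA : ∀ x, ε x ∈ A := fun x => hA ▸ Submodule.mem_sup_left ⟨x, rfl⟩
  refine ⟨G, φ ∘ₗ ε, hmin, fun e x hx => hφ _ _ (hgr _ _ hx), ?_, fun x => ?_, hD⟩
  · rw [← hA, Submodule.map_sup, LinearMap.range_comp, sup_assoc]
    congr 1
    rw [eq_comm, sup_eq_right]
    rintro _ ⟨b, hb, rfl⟩
    exact (hB' b (hBA hb)).2 hb
  · rw [LinearMap.comp_apply, hB' _ (hεA x), hB]

/-- Multiplication by a variable carries a resolution of `A` to one of `yA`. -/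
theorem HasRes.mulX {m : ℕ} {κ : Type} {δ : κ → ℤ} {A : Submodule (PolyS m) (κ → PolyS m)}
    {D : ℕ → Set ℤ} (h : HasRes δ A ⊥ D) (y : Fin m) :
    HasRes δ (A.map (LinearMap.lsmul (PolyS m) _ (X y))) ⊥ (fun i => (· + 1) '' D i) := by
  obtain ⟨G, ε, hmin, hgr, hA, hB, hD⟩ := h
  rw [sup_bot_eq] at hA
  refine ⟨G.twist, (X y : PolyS m) • ε, hmin, hgr.X_smul y, ?_, fun x => ?_, fun i => ?_⟩
  · rw [sup_bot_eq, ← hA]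
    ext v
    constructor
    · rintro ⟨x, rfl⟩
      exact ⟨_, ⟨x, rfl⟩, rfl⟩
    · rintro ⟨_, ⟨x, rfl⟩, rfl⟩
      exact ⟨x, rfl⟩
  · have := hB x
    simp only [Submodule.mem_bot] at this ⊢
    refine Iff.trans ?_ this
    change (X y : PolyS m) • ε x = 0 ↔ _
    have key : ∀ v : κ → PolyS m, (X y : PolyS m) • v = 0 ↔ v = 0 := by
      intro v
      rw [smul_eq_zero]
      simp [X_ne_zero]
    exact key _
  · change _ = (· + 1) '' D i
    rw [← hD i, ← Set.range_comp]
    rfl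

/-! ### Linear resolutions of powers of ideals of variables -/

/-- The ideal generated by the variables in `T`. -/
def varIdeal {m : ℕ} (T : Finset (Fin m)) : Ideal (PolyS m) :=
  Ideal.span (X '' (T : Set (Fin m)))

/-- The polynomials all of whose monomials have degree at least `d` in the variables in `T`. -/
def ordIdeal {m : ℕ} (T : Finset (Fin m)) (d : ℕ) : Ideal (PolyS m) where
  carrier := {p | ∀ s, coeff s p ≠ 0 → d ≤ ∑ i ∈ T, s i}
  zero_mem' := by
    intro s hs
    simp at hs
  add_mem' := by
    intro p q hp hq s hs
    rw [coeff_add] at hs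
    by_cases h : coeff s p = 0
    · exact hq s (by simpa [h] using hs)
    · exact hp s h
  smul_mem' := by
    intro c p hp s hs
    rw [smul_eq_mul, coeff_mul] at hs
    obtain ⟨x, hx, hne⟩ := Finset.exists_ne_zero_of_sum_ne_zero hs
    rw [Finset.HasAntidiagonal.mem_antidiagonal] at hx
    have h1 := hp x.2 (right_ne_zero_of_mul hne)
    rw [← hx]
    refine h1.trans (Finset.sum_le_sum fun i _ => ?_)
    simp

theorem mem_ordIdeal {m : ℕ} {T : Finset (Fin m)} {d : ℕ} {p : PolyS m} :
    p ∈ ordIdeal T d ↔ ∀ s, coeff s p ≠ 0 → d ≤ ∑ i ∈ T, s i := Iff.rfl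

theorem varIdeal_pow {m : ℕ} (T : Finset (Fin m)) (d : ℕ) : varIdeal T ^ d = ordIdeal T d := by
  apply le_antisymm
  · induction d with
    | zero =>
      intro p _ s _
      exact Nat.zero_le _
    | succ d ih =>
      have h1 : varIdeal T ≤ ordIdeal T 1 := by
        rw [varIdeal, Ideal.span_le]
        rintro _ ⟨i, hi, rfl⟩ s hs
        rw [coeff_X] at hs
        split_ifs at hs with h
        · rw [← h]
          exact (by simp : 1 ≤ (Finsupp.single i 1 : Fin m →₀ ℕ) i).trans
            (Finset.single_le_sum (f := fun j => (Finsupp.single i 1 : Fin m →₀ ℕ) j)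
              (fun _ _ => Nat.zero_le _) hi)
        · exact absurd rfl hs
      rw [pow_succ]
      refine Ideal.mul_le.2 fun p hp q hq s hs => ?_
      rw [coeff_mul] at hs
      obtain ⟨x, hx, hne⟩ := Finset.exists_ne_zero_of_sum_ne_zero hs
      rw [Finset.HasAntidiagonal.mem_antidiagonal] at hx
      have h2 := ih hp x.1 (left_ne_zero_of_mul hne)
      have h3 := h1 hq x.2 (right_ne_zero_of_mul hne)
      rw [← hx]
      simp only [Finsupp.add_apply, Finset.sum_add_distrib]
      omega
  · have mono : ∀ (d : ℕ) (s : Fin m →₀ ℕ) (c : ℂ), d ≤ ∑ i ∈ T, s i →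
        monomial s c ∈ varIdeal T ^ d := by
      intro d
      induction d with
      | zero => intros; simp
      | succ d ih =>
        intro s c h
        obtain ⟨i, hi, hne⟩ := Finset.exists_ne_zero_of_sum_ne_zero (s := T) (f := fun i => s i)
          (by omega)
        have hle : Finsupp.single i 1 ≤ s := by
          rw [Finsupp.single_le_iff]
          exact Nat.one_le_iff_ne_zero.2 hne
        have hs : Finsupp.single i 1 + (s - Finsupp.single i 1) = s := add_tsub_cancel_of_le hle
        have h1 : ∑ j ∈ T, s j = 1 + ∑ j ∈ T, (s - Finsupp.single i 1 : Fin m →₀ ℕ) j := by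
          conv_lhs => rw [← hs]
          simp only [Finsupp.add_apply, Finset.sum_add_distrib]
          congr 1
          simp [Finsupp.single_apply, hi]
        rw [← hs, ← one_mul c, ← monomial_mul, pow_succ']
        exact Ideal.mul_mem_mul (Ideal.subset_span ⟨i, hi, rfl⟩) (ih _ _ (by omega))
    intro p hp
    rw [p.as_sum]
    refine Ideal.sum_mem _ fun s hs => mono d s _ (hp s ?_)
    simpa using hs

theorem mem_varIdeal_pow {m : ℕ} {T : Finset (Fin m)} {d : ℕ} {p : PolyS m} :
    p ∈ varIdeal T ^ d ↔ ∀ s, coeff s p ≠ 0 → d ≤ ∑ i ∈ T, s i := by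
  rw [varIdeal_pow, mem_ordIdeal]

theorem varIdeal_insert {m : ℕ} (T : Finset (Fin m)) (y : Fin m) :
    varIdeal (insert y T) = varIdeal T ⊔ Ideal.span {X y} := by
  rw [varIdeal, varIdeal, Finset.coe_insert, Set.image_insert_eq, Ideal.span_insert, sup_comm]

/-- An ideal as a submodule of the free module of rank one. -/
def toV {m : ℕ} (I : Ideal (PolyS m)) : Submodule (PolyS m) (Unit → PolyS m) :=
  Submodule.comap (LinearMap.proj ()) I

theorem mem_toV {m : ℕ} {I : Ideal (PolyS m)} {v : Unit → PolyS m} : v ∈ toV I ↔ v () ∈ I := Iff.rfl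

theorem sup_span_pow {R : Type*} [CommRing R] (J : Ideal R) (y : R) (d : ℕ) :
    (J ⊔ Ideal.span {y}) ^ (d + 1) =
      J ^ (d + 1) ⊔ Ideal.span {y} * (J ⊔ Ideal.span {y}) ^ d := by
  apply le_antisymm
  · induction d with
    | zero => simp
    | succ d ih =>
      rw [pow_succ' _ (d + 1), Ideal.sup_mul]
      refine sup_le ?_ le_sup_right
      refine (Ideal.mul_mono_right ih).trans ?_
      rw [Ideal.mul_sup, ← pow_succ', mul_left_comm]
      refine sup_le_sup le_rfl (Ideal.mul_mono_right ?_)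
      rw [pow_succ']
      exact Ideal.mul_mono_left le_sup_left
  · refine sup_le (Ideal.pow_right_mono le_sup_left _) ?_
    rw [pow_succ']
    exact Ideal.mul_mono_left le_sup_right

/-- The `d`-th power of an ideal generated by variables has a linear minimal resolution. With `y`
a further variable, `I = (T)` and `I' = (T, y)`, the ideal `I'^(d+1)` is an extension of
`I'^(d+1) / yI'^d = I^(d+1) / yI^(d+1)` by `yI'^d`. -/
theorem hasRes_varIdeal_pow {m : ℕ} (T : Finset (Fin m)) :
    ∀ d : ℕ, ∃ D, HasRes (fun _ : Unit => 0) (toV (varIdeal T ^ d)) ⊥ D ∧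
      (∀ i, D i ⊆ {(d : ℤ) + i}) ∧ ∀ i, T.card + 1 ≤ i → D i = ∅ := by
  have hzero : ∃ D, HasRes (m := m) (fun _ : Unit => 0) ⊤ ⊥ D ∧
      (∀ i, D i ⊆ {((0 : ℕ) : ℤ) + i}) ∧ ∀ i, 1 ≤ i → D i = ∅ := by
    let G : GC m :=
      { ι := fun i => match i with | 0 => Unit | _ + 1 => Empty
        fin := fun i => match i with
          | 0 => inferInstanceAs (Finite Unit)
          | _ + 1 => inferInstanceAs (Finite Empty)
        deg := fun _ _ => 0
        d := fun _ => 0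
        gr := fun _ _ _ _ _ => Submodule.zero_mem _
        exact := fun i x => ⟨fun _ => ⟨0, funext fun a => a.elim⟩, fun _ => rfl⟩ }
    refine ⟨fun i => Set.range (G.deg i), ⟨G, LinearMap.id, fun _ _ _ _ => map_zero _,
      fun e x hx => hx, ?_, fun x => ?_, fun _ => rfl⟩, ?_, ?_⟩
    · rw [LinearMap.range_id]; exact top_sup_eq _
    · exact ⟨fun h => ⟨0, h.symm⟩, fun ⟨_, h⟩ => h.symm⟩
    · rintro (_ | i)
      · rintro _ ⟨_, rfl⟩
        rfl
      · rintro _ ⟨a, _⟩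
        exact Empty.elim a
    · rintro (_ | i) hi
      · omega
      · exact Set.range_eq_empty_iff.2 ⟨fun a : Empty => a.elim⟩
  have htop : toV (⊤ : Ideal (PolyS m)) = ⊤ := rfl
  induction T using Finset.induction_on with
  | empty =>
    intro d
    cases d with
    | zero =>
      rw [pow_zero, Ideal.one_eq_top, htop]
      exact hzero
    | succ d =>
      let G : GC m :=
        { ι := fun _ => Empty
          fin := fun i => inferInstance
          deg := fun _ _ => 0
          d := fun _ => 0
          gr := fun _ _ _ _ _ => Submodule.zero_mem _
          exact := fun i x => ⟨fun _ => ⟨0, funext fun a => a.elim⟩, fun _ => rfl⟩ }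
      have hbot : toV (varIdeal (∅ : Finset (Fin m)) ^ (d + 1)) = ⊥ := by
        have : varIdeal (∅ : Finset (Fin m)) = ⊥ := by simp [varIdeal]
        rw [this, ← Ideal.zero_eq_bot, zero_pow (Nat.succ_ne_zero d), eq_bot_iff]
        intro v hv
        exact funext fun _ => hv
      rw [hbot]
      refine ⟨fun _ => ∅, ⟨G, 0, fun _ _ _ _ => map_zero _,
        fun _ _ _ _ => Submodule.zero_mem _, by simp, fun x => ?_, fun _ => Set.range_eq_empty_iff.2 ⟨fun a : Empty => a.elim⟩⟩, ?_, ?_⟩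
      · exact ⟨fun h => ⟨0, funext fun a => a.elim⟩, fun _ => Submodule.zero_mem _⟩
      · simp
      · simp
  | insert y T hy ih =>
    intro d
    induction d with
    | zero =>
      rw [pow_zero, Ideal.one_eq_top, htop]
      obtain ⟨D, h1, h2, h3⟩ := hzero
      exact ⟨D, h1, h2, fun i hi => h3 i (by omega)⟩
    | succ d ihd =>
      obtain ⟨D₁, h1, h1', h1''⟩ := ihd
      obtain ⟨D₂, h2, h2', h2''⟩ := ih (d + 1)
      have hB := h1.mulX y
      have hX0 : (X y : PolyS m) ≠ 0 := X_ne_zero _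
      have hQ := (h2.quot y (fun v _ hv => by
        rw [Submodule.mem_bot, smul_eq_zero] at hv
        exact hv.resolve_left hX0)).map LinearMap.id
        (fun e x hx => hx) ((toV (varIdeal (insert y T) ^ d)).map
          (LinearMap.lsmul (PolyS m) _ (X y))) (fun v hv => by
            rw [bot_sup_eq]
            constructor
            · rintro ⟨u, hu, huv⟩
              refine ⟨u, ?_, huv⟩
              have h0 : X y * u () = v () := congrFun huv ()
              rw [SetLike.mem_coe, mem_toV, mem_varIdeal_pow]
              rw [mem_toV, mem_varIdeal_pow, ← h0] at hv
              intro s hs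
              have := hv (Finsupp.single y 1 + s) (by rwa [coeff_X_mul])
              refine this.trans (Finset.sum_le_sum fun i hi => ?_)
              have hne : i ≠ y := by rintro rfl; exact hy hi
              simp [hne.symm]
            · rintro ⟨u, hu, huv⟩
              refine ⟨u, ?_, huv⟩
              rw [SetLike.mem_coe, mem_toV] at hu ⊢
              have hle : varIdeal T ≤ varIdeal (insert y T) := by
                rw [varIdeal_insert]; exact le_sup_left
              exact Ideal.pow_le_pow_right (Nat.le_succ d) (Ideal.pow_right_mono hle _ hu))
      rw [Submodule.map_id] at hQ
      have hAB : toV (varIdeal T ^ (d + 1)) ⊔ (toV (varIdeal (insert y T) ^ d)).map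
          (LinearMap.lsmul (PolyS m) _ (X y)) = toV (varIdeal (insert y T) ^ (d + 1)) := by
        ext v
        rw [mem_toV, varIdeal_insert, sup_span_pow, ← varIdeal_insert]
        constructor
        · intro h
          obtain ⟨a, ha, _, ⟨u, hu, rfl⟩, rfl⟩ := Submodule.mem_sup.1 h
          exact Submodule.add_mem_sup ha (Ideal.mul_mem_mul (Ideal.mem_span_singleton_self _) hu)
        · intro h
          obtain ⟨a, ha, b, hb, hab⟩ := Submodule.mem_sup.1 h
          obtain ⟨u, hu, rfl⟩ := Ideal.mem_span_singleton_mul.1 hb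
          have : v = (fun _ => a) + (X y : PolyS m) • (fun _ => u) := funext fun _ => hab.symm
          rw [this]
          exact Submodule.add_mem_sup ha ⟨fun _ => u, hu, rfl⟩
      rw [hAB] at hQ
      have hD₁ : ∀ i, ∀ p ∈ (· + 1) '' D₁ i, p = (d : ℤ) + 1 + i := by
        rintro i _ ⟨a, ha, rfl⟩
        have : a = (d : ℤ) + i := h1' i ha
        simp only [this]
        ring
      have hD₂ : ∀ i, ∀ p ∈ coneSet D₂ i, p = (d : ℤ) + 1 + i := by
        have h2a : ∀ i, ∀ p ∈ D₂ i, p = (d : ℤ) + 1 + i := by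
          intro i p hp
          have : p = ((d + 1 : ℕ) : ℤ) + i := h2' i hp
          rw [this]
          push_cast
          ring
        rintro (_ | i) p hp
        · exact h2a 0 p hp
        · rcases hp with hp | ⟨a, ha, rfl⟩
          · exact h2a _ p hp
          · simp only [h2a i a ha]
            push_cast
            ring
      refine ⟨_, hB.ext hQ ?_, ?_, ?_⟩
      · intro i p hp q hq
        rw [hD₁ i p hp, hD₂ _ q hq]
        push_cast
        omega
      · rintro i p (hp | hp)
        · rw [hD₁ i p hp, Set.mem_singleton_iff]
          push_cast
          ring
        · rw [hD₂ i p hp, Set.mem_singleton_iff]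
          push_cast
          ring
      · intro i hi
        rw [Finset.card_insert_of_notMem hy] at hi h1''
        obtain ⟨i, rfl⟩ : ∃ j, i = j + 1 := ⟨i - 1, by omega⟩
        simp only [coneSet]
        rw [h1'' (i + 1) hi, h2'' (i + 1) (by omega), h2'' i (by omega)]
        simp

/-! ### Extension of scalars to more variables -/

/-- The inclusion `ℂ[x] → ℂ[x, y]`, where the `y`'s are the last `N` variables. -/
def incl (a N : ℕ) : PolyS a →ₐ[ℂ] PolyS (a + N) := rename (Fin.castAdd N)

/-- The identification `ℂ[x, y] = ℂ[x][y]`. -/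
def yPoly (a N : ℕ) : PolyS (a + N) ≃ₐ[ℂ] MvPolynomial (Fin N) (PolyS a) :=
  (renameEquiv ℂ (finSumFinEquiv.symm.trans (Equiv.sumComm (Fin a) (Fin N)))).trans
    (sumAlgEquiv ℂ (Fin N) (Fin a))

theorem yPoly_incl {a N : ℕ} (q : PolyS a) : yPoly a N (incl a N q) = C q := by
  have h : ((yPoly a N : PolyS (a + N) →ₐ[ℂ] _).comp (incl a N)) =
      Algebra.algHom ℂ (PolyS a) (MvPolynomial (Fin N) (PolyS a)) := by
    ext1 i
    change sumAlgEquiv ℂ (Fin N) (Fin a) (rename _ (rename _ (X i))) = C (X i)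
    rw [rename_X, rename_X]
    have he : (finSumFinEquiv.symm.trans (Equiv.sumComm (Fin a) (Fin N))) (Fin.castAdd N i) =
        Sum.inr i := by simp
    rw [he]
    exact sumRingEquiv_X_inr ℂ (Fin N) (Fin a) i
  exact DFunLike.congr_fun h q

theorem incl_mem_hpiece {a N : ℕ} {e : ℤ} {q : PolyS a} (hq : q ∈ hpiece a e) :
    incl a N q ∈ hpiece (a + N) e := by
  unfold hpiece at *
  split_ifs at * with h
  · rw [mem_homogeneousSubmodule] at *
    exact hq.rename_isHomogeneous
  · rw [Submodule.mem_bot] at *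
    rw [hq, map_zero]

theorem constantCoeff_incl {a N : ℕ} (q : PolyS a) :
    constantCoeff (incl a N q) = constantCoeff q := constantCoeff_rename _ _

open Classical in
/-- Extension of scalars from `ℂ[x]` to `ℂ[x, y]` of a map between free modules. -/
def bcMap {a : ℕ} (N : ℕ) {ι κ : Type} [Finite ι]
    (f : (ι → PolyS a) →ₗ[PolyS a] (κ → PolyS a)) :
    (ι → PolyS (a + N)) →ₗ[PolyS (a + N)] (κ → PolyS (a + N)) :=
  have := Fintype.ofFinite ι
  Fintype.linearCombination _ fun i b => incl a N (f (Pi.single i 1) b)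

theorem bcMap_apply {a N : ℕ} {ι κ : Type} [Fintype ι] [DecidableEq ι]
    (f : (ι → PolyS a) →ₗ[PolyS a] (κ → PolyS a)) (x : ι → PolyS (a + N)) (b : κ) :
    bcMap N f x b = ∑ i, x i * incl a N (f (Pi.single i 1) b) := by
  classical
  have h : bcMap N f x b = (∑ i, x i • fun b => incl a N (f (Pi.single i 1) b)) b := by
    unfold bcMap
    rw [Subsingleton.elim (Fintype.ofFinite ι) ‹Fintype ι›]
    simp only [Fintype.linearCombination_apply]
    congr!
  rw [h, Finset.sum_apply]
  rfl

theorem map_eq_sum_single {a : ℕ} {ι κ : Type} [Fintype ι] [DecidableEq ι]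
    (f : (ι → PolyS a) →ₗ[PolyS a] (κ → PolyS a)) (x : ι → PolyS a) (b : κ) :
    f x b = ∑ i, x i * f (Pi.single i 1) b := by
  conv_lhs => rw [pi_eq_sum_univ x, map_sum, Finset.sum_apply]
  refine Finset.sum_congr rfl fun i _ => ?_
  rw [map_smul]
  have : (fun j => if i = j then (1 : PolyS a) else 0) = Pi.single i 1 := by
    ext1 j
    simp [Pi.single_apply, eq_comm]
  rw [this]
  rfl

theorem coeff_bcMap {a N : ℕ} {ι κ : Type} [Finite ι]
    (f : (ι → PolyS a) →ₗ[PolyS a] (κ → PolyS a)) (x : ι → PolyS (a + N)) (b : κ)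
    (s : Fin N →₀ ℕ) :
    coeff s (yPoly a N (bcMap N f x b)) = f (fun i => coeff s (yPoly a N (x i))) b := by
  classical
  have := Fintype.ofFinite ι
  rw [bcMap_apply, map_sum, coeff_sum, map_eq_sum_single]
  refine Finset.sum_congr rfl fun i _ => ?_
  rw [map_mul, yPoly_incl, mul_comm, coeff_C_mul, mul_comm]

theorem bcMap_gr {a N : ℕ} {ι κ : Type} [Finite ι] {δ : ι → ℤ} {ε : κ → ℤ}
    {f : (ι → PolyS a) →ₗ[PolyS a] (κ → PolyS a)} (hf : IsGr δ ε f) : IsGr δ ε (bcMap N f) := by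
  classical
  have := Fintype.ofFinite ι
  intro e x hx b
  rw [bcMap_apply]
  refine Submodule.sum_mem _ fun i _ => ?_
  have h1 := hf _ _ (homog_single (δ := δ) i (one_mem_hpiece (m := a))) b
  have := hpiece_mul (hx i) (incl_mem_hpiece (N := N) h1)
  rwa [zero_add, sub_add_sub_cancel] at this

/-- Extension of scalars from `ℂ[x]` to `ℂ[x, y]` preserves exactness. -/
theorem bcMap_exact {a N : ℕ} {ι κ μ : Type} [Finite ι] [Finite κ]
    {g : (ι → PolyS a) →ₗ[PolyS a] (κ → PolyS a)} {f : (κ → PolyS a) →ₗ[PolyS a] (μ → PolyS a)}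
    (h : ∀ x, f x = 0 ↔ ∃ y, g y = x) (x : κ → PolyS (a + N)) :
    bcMap N f x = 0 ↔ ∃ y, bcMap N g y = x := by
  classical
  have := Fintype.ofFinite ι
  have := Fintype.ofFinite κ
  have ext : ∀ p q : PolyS (a + N),
      (∀ s, coeff s (yPoly a N p) = coeff s (yPoly a N q)) → p = q := fun p q hpq =>
    (yPoly a N).injective (MvPolynomial.ext _ _ hpq)
  constructor
  · intro hx
    have h1 : ∀ s : Fin N →₀ ℕ, ∃ y, g y = fun i => coeff s (yPoly a N (x i)) := by
      intro s
      refine (h _).1 (funext fun b => ?_)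
      rw [← coeff_bcMap, hx]
      simp
    choose y hy using h1
    let A : Finset (Fin N →₀ ℕ) := Finset.univ.biUnion fun i => (yPoly a N (x i)).support
    refine ⟨fun c => (yPoly a N).symm (∑ s ∈ A, monomial s (y s c)), funext fun b => ext _ _ ?_⟩
    intro s
    rw [coeff_bcMap]
    have h2 : (fun i => coeff s (yPoly a N ((yPoly a N).symm (∑ s ∈ A, monomial s (y s i))))) =
        if s ∈ A then y s else 0 := by
      funext i
      rw [AlgEquiv.apply_symm_apply, coeff_sum]
      simp only [coeff_monomial]
      rw [Finset.sum_ite_eq']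
      split_ifs <;> rfl
    rw [h2]
    split_ifs with hs
    · rw [hy]
    · rw [map_zero, Pi.zero_apply, eq_comm]
      simp only [A, Finset.mem_biUnion, Finset.mem_univ, true_and, not_exists] at hs
      simpa using hs b
  · rintro ⟨y, rfl⟩
    refine funext fun b => ext _ _ fun s => ?_
    rw [coeff_bcMap]
    have h3 : (fun i => coeff s (yPoly a N (bcMap N g y i))) =
        g fun i => coeff s (yPoly a N (y i)) := funext fun i => coeff_bcMap _ _ _ _
    rw [h3, (h _).2 ⟨_, rfl⟩]
    simp

theorem constantCoeff_bcMap {a N : ℕ} {ι κ : Type} [Finite ι]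
    {f : (ι → PolyS a) →ₗ[PolyS a] (κ → PolyS a)} (hf : ∀ x b, constantCoeff (f x b) = 0)
    (x : ι → PolyS (a + N)) (b : κ) : constantCoeff (bcMap N f x b) = 0 := by
  classical
  have := Fintype.ofFinite ι
  rw [bcMap_apply, map_sum]
  refine Finset.sum_eq_zero fun j _ => ?_
  rw [map_mul, constantCoeff_incl, hf, mul_zero]

/-- Extension of scalars from `ℂ[x]` to `ℂ[x, y]` of a complex of free modules. -/
def GC.baseChange {a : ℕ} (G : GC a) (N : ℕ) : GC (a + N) where
  ι := G.ι
  fin := G.fin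
  deg := G.deg
  d i := bcMap N (G.d i)
  gr i := bcMap_gr (G.gr i)
  exact i := bcMap_exact (G.exact i)

theorem GC.MinFrom.baseChange {a : ℕ} {G : GC a} {k : ℕ} (h : G.MinFrom k) (N : ℕ) :
    (G.baseChange N).MinFrom k := fun i hi => constantCoeff_bcMap (h i hi)

/-- The image of the first differential of a minimal complex is resolved by the rest of the
complex. -/
theorem GC.hasRes_range {m : ℕ} (G : GC m) (h : G.MinFrom 0) :
    HasRes (G.deg 0) (LinearMap.range (G.d 0)) ⊥ (fun i => Set.range (G.deg (i + 1))) := by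
  refine ⟨G.shift, G.d 0, fun i _ => h (i + 1) (Nat.zero_le _), G.gr 0, sup_bot_eq _, fun x => ?_,
    fun _ => rfl⟩
  exact G.exact 0 x

/-! ### Reduction modulo the new variables -/

/-- The operator sending a monomial divisible by `X y` to its quotient by `X y`, and every other
monomial to zero. -/
def divX {m : ℕ} (y : Fin m) : PolyS m →+ PolyS m where
  toFun p := p.divMonomial (Finsupp.single y 1)
  map_zero' := zero_divMonomial _
  map_add' p q := add_divMonomial p q _

theorem coeff_divX {m : ℕ} (y : Fin m) (p : PolyS m) (s : Fin m →₀ ℕ) :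
    coeff s (divX y p) = coeff (Finsupp.single y 1 + s) p := coeff_divMonomial _ _ _

theorem divX_X_mul {m : ℕ} (y : Fin m) (p : PolyS m) : divX y (X y * p) = p := by
  ext s
  rw [coeff_divX, coeff_X_mul]

/-- `divX y` is linear over the polynomials in which `y` does not occur. -/
theorem divX_mul {m : ℕ} {y : Fin m} {q : PolyS m} (hq : ∀ s, coeff s q ≠ 0 → s y = 0)
    (p : PolyS m) : divX y (q * p) = q * divX y p := by
  classical
  conv_lhs => rw [q.as_sum, Finset.sum_mul, map_sum]
  conv_rhs => rw [q.as_sum, Finset.sum_mul]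
  refine Finset.sum_congr rfl fun s hs => ?_
  have hsy := hq s (by simpa using hs)
  ext t
  rw [coeff_divX, coeff_monomial_mul', coeff_monomial_mul', coeff_divX]
  have h : s ≤ Finsupp.single y 1 + t ↔ s ≤ t := by
    constructor
    · intro h i
      have := h i
      by_cases hi : i = y
      · rw [hi, hsy]
        exact Nat.zero_le _
      · simpa [Finsupp.single_apply, Ne.symm hi] using this
    · intro h
      exact h.trans le_add_self
  simp only [h]
  split_ifs with hst
  · rw [add_tsub_assoc_of_le hst]
  · rfl

theorem divX_incl_mul {a N : ℕ} {y : Fin (a + N)} (hy : a ≤ (y : ℕ)) (q : PolyS a)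
    (p : PolyS (a + N)) : divX y (incl a N q * p) = incl a N q * divX y p := by
  refine divX_mul (fun s hs => ?_) p
  obtain ⟨u, rfl, -⟩ := coeff_rename_ne_zero _ _ _ hs
  refine Finsupp.mapDomain_of_notMem_range _ _ ?_
  rintro ⟨i, rfl⟩
  have := i.2
  simp only [Fin.val_castAdd] at hy
  omega

theorem divX_X_mul_of_ne {m : ℕ} {y z : Fin m} (h : z ≠ y) (p : PolyS m) :
    divX y (X z * p) = X z * divX y p := by
  refine divX_mul (fun s hs => ?_) p
  rw [coeff_X] at hs
  split_ifs at hs with hs'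
  · rw [← hs']
    simp [h]
  · exact absurd rfl hs

/-- The operator `divX y` applied to every coordinate of a vector. -/
def divV {m : ℕ} {κ : Type} (y : Fin m) : (κ → PolyS m) →+ (κ → PolyS m) :=
  AddMonoidHom.compLeft (divX y) κ

theorem divV_X_smul {m : ℕ} {κ : Type} (y : Fin m) (v : κ → PolyS m) :
    divV y ((X y : PolyS m) • v) = v := funext fun b => divX_X_mul y (v b)

theorem divV_X_smul_of_ne {m : ℕ} {κ : Type} {y z : Fin m} (h : z ≠ y) (v : κ → PolyS m) :
    divV y ((X z : PolyS m) • v) = (X z : PolyS m) • divV y v :=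
  funext fun b => divX_X_mul_of_ne h (v b)

theorem divV_mem_smul {m : ℕ} {κ : Type} {y : Fin m} {T : Finset (Fin m)} (hyT : y ∉ T)
    {W : Submodule (PolyS m) (κ → PolyS m)} (hW : ∀ v ∈ W, divV y v ∈ W)
    {v : κ → PolyS m} (hv : v ∈ varIdeal T • W) : divV y v ∈ varIdeal T • W := by
  refine Submodule.smul_induction_on hv (fun r hr n hn => ?_) (fun u w hu hw => ?_)
  · refine Submodule.span_induction (p := fun r _ => ∀ n ∈ W, divV y (r • n) ∈ varIdeal T • W)
      ?_ ?_ ?_ ?_ hr n hn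
    · rintro _ ⟨z, hz, rfl⟩ n hn
      have hne : z ≠ y := by rintro rfl; exact hyT hz
      rw [divV_X_smul_of_ne hne]
      exact Submodule.smul_mem_smul (Ideal.subset_span ⟨z, hz, rfl⟩) (hW _ hn)
    · intro n _
      rw [zero_smul, map_zero]
      exact Submodule.zero_mem _
    · intro r₁ r₂ _ _ h₁ h₂ n hn
      rw [add_smul, map_add]
      exact Submodule.add_mem _ (h₁ n hn) (h₂ n hn)
    · intro c r _ h n hn
      rw [smul_eq_mul, mul_comm, mul_smul]
      exact h (c • n) (Submodule.smul_mem _ _ hn)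
  · rw [map_add]
    exact Submodule.add_mem _ hu hw

theorem divV_bcMap {a N : ℕ} {ι κ : Type} [Finite ι] {y : Fin (a + N)} (hy : a ≤ (y : ℕ))
    (f : (ι → PolyS a) →ₗ[PolyS a] (κ → PolyS a)) (x : ι → PolyS (a + N)) :
    divV y (bcMap N f x) = bcMap N f (divV y x) := by
  classical
  have := Fintype.ofFinite ι
  funext b
  change divX y (bcMap N f x b) = _
  rw [bcMap_apply, bcMap_apply, map_sum]
  refine Finset.sum_congr rfl fun i _ => ?_
  rw [mul_comm, divX_incl_mul hy, mul_comm]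
  rfl

/-- If `W` is extended from `ℂ[x]`, the variables `y` form a regular sequence on `W`. -/
theorem mem_of_X_smul_mem {a N : ℕ} {ι κ : Type} [Finite ι] {y : Fin (a + N)} (hy : a ≤ (y : ℕ))
    (f : (ι → PolyS a) →ₗ[PolyS a] (κ → PolyS a)) {T : Finset (Fin (a + N))} (hyT : y ∉ T)
    {v : κ → PolyS (a + N)}
    (hv : (X y : PolyS (a + N)) • v ∈ varIdeal T • LinearMap.range (bcMap N f)) :
    v ∈ varIdeal T • LinearMap.range (bcMap N f) := by
  have h := divV_mem_smul hyT (W := LinearMap.range (bcMap N f)) (by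
    rintro _ ⟨x, rfl⟩
    exact ⟨_, (divV_bcMap hy f x).symm⟩) hv
  rwa [divV_X_smul] at h

/-- The sets `D i` are empty exactly for `i ≥ L`, have greatest elements `t i` for `i < L`, and
lie in `[c + i, ∞)`. -/
structure TopSeq (D : ℕ → Set ℤ) (L : ℕ) (t : ℕ → ℤ) (c : ℤ) : Prop where
  top : ∀ i, i < L → IsGreatest (D i) (t i)
  empty : ∀ i, L ≤ i → D i = ∅
  low : ∀ i, ∀ p ∈ D i, c + i ≤ p

theorem TopSeq.cone {D : ℕ → Set ℤ} {L : ℕ} {t : ℕ → ℤ} {c : ℤ} (h : TopSeq D (L + 1) t c)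
    (ht : ∀ i, t i + 1 ≤ t (i + 1)) (htL : t (L + 1) = t L + 1) :
    TopSeq (coneSet D) (L + 2) t c where
  top i hi := by
    rcases i with _ | i
    · exact h.top 0 (by omega)
    · have h1 := h.top i (by omega)
      constructor
      · by_cases hiL : i + 1 < L + 1
        · exact Or.inl (h.top _ hiL).1
        · obtain rfl : i = L := by omega
          exact Or.inr ⟨t i, h1.1, htL.symm⟩
      · rintro p (hp | ⟨q, hq, rfl⟩)
        · by_cases hiL : i + 1 < L + 1
          · exact (h.top _ hiL).2 hp
          · rw [h.empty _ (by omega)] at hp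
            exact hp.elim
        · have h2 : q ≤ t i := h1.2 hq
          have := ht i
          change q + 1 ≤ _
          omega
  empty i hi := by
    obtain ⟨i, rfl⟩ : ∃ j, i = j + 1 := ⟨i - 1, by omega⟩
    simp [coneSet, h.empty (i + 1) (by omega), h.empty i (by omega)]
  low i p hp := by
    rcases i with _ | i
    · exact h.low 0 p hp
    · rcases hp with hp | ⟨q, hq, rfl⟩
      · exact h.low _ p hp
      · have := h.low i q hq
        change c + ((i + 1 : ℕ) : ℤ) ≤ q + 1
        push_cast
        omega

/-- If `W`, extended from `ℂ[x]`, has a resolution of length `L` with top degrees `t i`, and `T` is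
a set of `y`-variables, then `W/(T)W` has a resolution of length `L + |T|`, whose top degrees
continue the sequence `t` by steps of one. -/
theorem hasRes_smul {a N : ℕ} {ι κ : Type} [Finite ι] {δ : κ → ℤ}
    (f : (ι → PolyS a) →ₗ[PolyS a] (κ → PolyS a)) {D : ℕ → Set ℤ} {L : ℕ} {t : ℕ → ℤ} {c : ℤ}
    (h : HasRes δ (LinearMap.range (bcMap N f)) ⊥ D) (hD : TopSeq D (L + 1) t c)
    (ht : ∀ i, t i + 1 ≤ t (i + 1)) (htL : ∀ i, L ≤ i → t (i + 1) = t i + 1)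
    (T : Finset (Fin (a + N))) (hT : ∀ y ∈ T, a ≤ (y : ℕ)) :
    ∃ D', HasRes δ (LinearMap.range (bcMap N f)) (varIdeal T • LinearMap.range (bcMap N f)) D' ∧
      TopSeq D' (L + T.card + 1) t c := by
  induction T using Finset.induction_on with
  | empty =>
    refine ⟨D, ?_, hD⟩
    have : varIdeal (∅ : Finset (Fin (a + N))) = ⊥ := by simp [varIdeal]
    rwa [this, Submodule.bot_smul]
  | insert y T hy ih =>
    obtain ⟨D', h', hD'⟩ := ih fun z hz => hT z (Finset.mem_insert_of_mem hz)
    refine ⟨coneSet D', ?_, ?_⟩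
    · have h1 := h'.quot y fun v _ hv =>
        mem_of_X_smul_mem (hT y (Finset.mem_insert_self _ _)) f hy hv
      rw [varIdeal_insert, Submodule.sup_smul]
      have h2 : Ideal.span {(X y : PolyS (a + N))} • LinearMap.range (bcMap N f) =
          (LinearMap.range (bcMap N f)).map (LinearMap.lsmul (PolyS (a + N)) _ (X y)) := by
        rw [Submodule.ideal_span_singleton_smul]
        rfl
      rwa [h2]
    · rw [Finset.card_insert_of_notMem hy]
      exact hD'.cone ht (htL _ (by omega))

/-! ### Construction of the ideal -/

/-- There are enough monomials of degree `k` in the variables in `Y`. -/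
theorem exists_exponents {m k : ℕ} (Y : Finset (Fin m)) (ι : Type) [Finite ι]
    (h : Nat.card ι ≤ (k + Y.card - 1).choose k) :
    ∃ α : ι → Fin m →₀ ℕ, Function.Injective α ∧ (∀ i, ∑ j ∈ Y, α i j = k) ∧
      ∀ i, ∀ j, j ∉ Y → α i j = 0 := by
  classical
  have := Fintype.ofFinite ι
  have hc : Fintype.card ι ≤ Fintype.card (Finset.finsuppAntidiag Y k) := by
    rw [Fintype.card_coe, Finset.card_finsuppAntidiag_nat_eq_choose, add_comm Y.card,
      ← Nat.card_eq_fintype_card]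
    exact h
  obtain ⟨e⟩ := Function.Embedding.nonempty_of_card_le hc
  refine ⟨fun i => (e i).1, fun i j hij => e.injective (Subtype.ext hij), fun i => ?_,
    fun i j hj => ?_⟩
  · exact (Finset.mem_finsuppAntidiag.1 (e i).2).1
  · by_contra hne
    exact hj ((Finset.mem_finsuppAntidiag.1 (e i).2).2 (Finsupp.mem_support_iff.2 hne))

/-- Modulo a power of the ideal of the variables in `Y`, distinct monomials of degree `k` in these
variables are independent. -/
theorem mem_of_sum_monomial_mem {m k : ℕ} {Y : Finset (Fin m)} {ι : Type} [Fintype ι]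
    {E : ι → Fin m →₀ ℕ} (hk : ∀ i, ∑ j ∈ Y, E i j = k)
    (hE : ∀ i i', (∀ j ∈ Y, E i j = E i' j) → i = i') {v : ι → PolyS m}
    (hv : ∑ i, v i * monomial (E i) 1 ∈ varIdeal Y ^ (k + 1)) (i : ι) : v i ∈ varIdeal Y := by
  classical
  rw [← pow_one (varIdeal Y), mem_varIdeal_pow]
  intro s hs
  by_contra hlt
  have hs0 : ∀ j ∈ Y, s j = 0 := Finset.sum_eq_zero_iff.1 (by omega)
  rw [mem_varIdeal_pow] at hv
  have h1 : coeff (s + E i) (∑ i, v i * monomial (E i) 1) = coeff s (v i) := by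
    rw [coeff_sum, Finset.sum_eq_single i]
    · rw [coeff_mul_monomial, mul_one]
    · intro i' _ hne
      rw [coeff_mul_monomial', if_neg]
      intro hle
      refine hne (hE _ _ fun j hj => ?_)
      have hle' : ∀ j ∈ Y, E i' j ≤ E i j := fun j hj => by
        have := hle j
        rwa [Finsupp.add_apply, hs0 j hj, zero_add] at this
      exact (Finset.sum_eq_sum_iff_of_le hle').1 ((hk i').trans (hk i).symm) j hj
    · intro h
      exact absurd (Finset.mem_univ i) h
  have h2 := hv (s + E i) (by rwa [h1])
  simp only [Finsupp.add_apply, Finset.sum_add_distrib, hk] at h2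
  omega

/-- The set of the last `N` variables. -/
def yVars (a N : ℕ) : Finset (Fin (a + N)) := Finset.univ.map (Fin.natAddEmb a)

theorem mem_yVars {a N : ℕ} {y : Fin (a + N)} : y ∈ yVars a N ↔ a ≤ (y : ℕ) := by
  simp only [yVars, Finset.mem_map, Finset.mem_univ, true_and]
  constructor
  · rintro ⟨j, rfl⟩
    simp
  · intro h
    exact ⟨⟨y - a, by omega⟩, Fin.ext (by simp; omega)⟩

theorem card_yVars (a N : ℕ) : (yVars a N).card = N := by
  simp [yVars]

/-- The substitution `y ↦ 0`. -/
def yZero (a N : ℕ) : PolyS (a + N) →ₐ[ℂ] PolyS (a + N) :=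
  aeval fun i => if a ≤ (i : ℕ) then 0 else X i

theorem sub_yZero_mem {a N : ℕ} (p : PolyS (a + N)) : p - yZero a N p ∈ varIdeal (yVars a N) := by
  rw [← Ideal.Quotient.mk_eq_mk_iff_sub_mem]
  have h : (Ideal.Quotient.mkₐ ℂ (varIdeal (yVars a N))) =
      (Ideal.Quotient.mkₐ ℂ (varIdeal (yVars a N))).comp (yZero a N) := by
    ext1 i
    rw [AlgHom.comp_apply, yZero, aeval_X]
    split_ifs with hi
    · rw [map_zero]
      exact Ideal.Quotient.eq_zero_iff_mem.2 (Ideal.subset_span ⟨i, mem_yVars.2 hi, rfl⟩)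
    · rfl
  exact DFunLike.congr_fun h p

theorem yZero_of_mem {a N : ℕ} {p : PolyS (a + N)} (hp : p ∈ varIdeal (yVars a N)) :
    yZero a N p = 0 := by
  have : varIdeal (yVars a N) ≤ RingHom.ker (yZero a N) := by
    rw [varIdeal, Ideal.span_le]
    rintro _ ⟨i, hi, rfl⟩
    rw [SetLike.mem_coe, RingHom.mem_ker, yZero, aeval_X, if_pos (mem_yVars.1 hi)]
  exact this hp

theorem yZero_incl {a N : ℕ} (q : PolyS a) : yZero a N (incl a N q) = incl a N q := by
  have h : (yZero a N).comp (incl a N) = incl a N := by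
    ext1 i
    rw [AlgHom.comp_apply, incl, rename_X, yZero, aeval_X, if_neg]
    have := i.2
    simp only [Fin.val_castAdd]
    omega
  exact DFunLike.congr_fun h q

theorem isPrime_varIdeal_yVars (a N : ℕ) : (varIdeal (yVars a N)).IsPrime := by
  have : varIdeal (yVars a N) = RingHom.ker (yZero a N) := by
    ext p
    refine ⟨yZero_of_mem, fun hp => ?_⟩
    rw [RingHom.mem_ker] at hp
    simpa [hp] using sub_yZero_mem p
  rw [this]
  exact RingHom.ker_isPrime _

/-- For `W` extended from `ℂ[x]`, a vector of `W` with all coordinates in `(y)` lies in `(y)W`: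
the cokernel of the inclusion of `W` is flat over `ℂ[y]`. -/
theorem mem_smul_range_bcMap {a N : ℕ} {ι κ : Type} [Finite ι]
    (f : (ι → PolyS a) →ₗ[PolyS a] (κ → PolyS a)) {v : κ → PolyS (a + N)}
    (hv : v ∈ LinearMap.range (bcMap N f)) (hv' : ∀ b, v b ∈ varIdeal (yVars a N)) :
    v ∈ varIdeal (yVars a N) • LinearMap.range (bcMap N f) := by
  classical
  have := Fintype.ofFinite ι
  obtain ⟨u, rfl⟩ := hv
  let w : ι → PolyS (a + N) := fun i => u i - yZero a N (u i)
  have hw : bcMap N f w = bcMap N f u := by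
    funext b
    have h0 := yZero_of_mem (hv' b)
    rw [bcMap_apply, map_sum] at h0
    rw [bcMap_apply, bcMap_apply, ← sub_eq_zero, ← Finset.sum_sub_distrib, ← neg_eq_zero, ← h0,
      ← Finset.sum_neg_distrib]
    refine Finset.sum_congr rfl fun i _ => ?_
    rw [map_mul, yZero_incl]
    simp only [w]
    ring
  rw [← hw, pi_eq_sum_univ w, map_sum]
  refine Submodule.sum_mem _ fun i _ => ?_
  rw [map_smul]
  exact Submodule.smul_mem_smul (sub_yZero_mem _) ⟨_, rfl⟩

/-- The construction of `J` from a minimal complex `G` over `ℂ[x]` resolving a module `M`: its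
first syzygy module, extended to `ℂ[x, y]` and reduced modulo `(y)`, is embedded in
`(y)^k/(y)^(k+1)`, and `J` is the preimage in `(y)^k`. -/
theorem exists_ideal {a N k L : ℕ} (ha : 0 < a) (G : GC a) (hmin : G.MinFrom 0)
    (hcard : Nat.card (G.ι 0) ≤ (k + N - 1).choose k) (hdeg : ∀ i, (k : ℤ) ≤ G.deg 0 i)
    {t : ℕ → ℤ} (hD : TopSeq (fun i => Set.range (G.deg (i + 1))) (L + 1) t (k + 1))
    (ht : ∀ i, t i + 1 ≤ t (i + 1)) (htL : ∀ i, L ≤ i → t (i + 1) = t i + 1) :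
    ∃ J : Ideal (PolyS (a + N)), varIdeal (yVars a N) ^ (k + 1) ≤ J ∧
      J ≤ varIdeal (yVars a N) ^ k ∧
      ∃ D, HasRes (fun _ : Unit => 0) (toV J) ⊥ D ∧ TopSeq D (L + N + 1) t (k + 1) := by
  classical
  have := Fintype.ofFinite (G.ι 0)
  set Y := yVars a N with hY
  have hW := (G.baseChange N).hasRes_range (hmin.baseChange N)
  change HasRes (G.deg 0) (LinearMap.range (bcMap N (G.d 0))) ⊥
    (fun i => Set.range (G.deg (i + 1))) at hW
  obtain ⟨D', hWY, hD'⟩ := hasRes_smul (G.d 0) hW hD ht htL Y fun y hy => mem_yVars.1 hy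
  rw [card_yVars] at hD'
  set W := LinearMap.range (bcMap N (G.d 0)) with hWdef
  obtain ⟨α, hαinj, hαk, hα0⟩ := exists_exponents (k := k) Y (G.ι 0) (by rwa [card_yVars])
  -- The basis vector of degree `d` is sent to `x₀ ^ (d - k) * y ^ α`, with distinct `α` of degree
  -- `k`; the factor `x₀ ^ (d - k)` makes the map degree-preserving.
  let x₀ : Fin (a + N) := ⟨0, by omega⟩
  have hx₀ : x₀ ∉ Y := by
    rw [mem_yVars]
    simp only [x₀]
    omega
  let E : G.ι 0 → Fin (a + N) →₀ ℕ := fun i => Finsupp.single x₀ (G.deg 0 i - k).toNat + α i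
  have hEY : ∀ i, ∀ j ∈ Y, E i j = α i j := by
    intro i j hj
    have : x₀ ≠ j := by rintro rfl; exact hx₀ hj
    simp [E, this]
  have hEk : ∀ i, ∑ j ∈ Y, E i j = k := fun i => by
    rw [← hαk i]
    exact Finset.sum_congr rfl (hEY i)
  have hEinj : ∀ i i', (∀ j ∈ Y, E i j = E i' j) → i = i' := by
    intro i i' h
    refine hαinj (Finsupp.ext fun j => ?_)
    by_cases hj : j ∈ Y
    · rw [← hEY i j hj, ← hEY i' j hj, h j hj]
    · rw [hα0 i j hj, hα0 i' j hj]
  have hEdeg : ∀ i, ((E i).degree : ℤ) = G.deg 0 i := by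
    intro i
    have h1 : (α i).degree = k := by
      rw [← hαk i, Finsupp.degree_eq_sum]
      refine (Finset.sum_subset (Finset.subset_univ _) fun j _ hj => hα0 i j hj).symm
    have h2 := hdeg i
    simp only [E, map_add, Finsupp.degree_single, h1]
    push_cast
    omega
  let φ : (G.ι 0 → PolyS (a + N)) →ₗ[PolyS (a + N)] (Unit → PolyS (a + N)) :=
    Fintype.linearCombination _ fun i _ => monomial (E i) 1
  have hφ : ∀ v, φ v () = ∑ i, v i * monomial (E i) 1 := by
    intro v
    change (∑ i, v i • fun _ : Unit => (monomial (E i) (1 : ℂ) : PolyS (a + N))) () = _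
    rw [Finset.sum_apply]
    rfl
  have hφgr : IsGr (G.deg 0) (fun _ : Unit => 0) φ := by
    rintro e x hx ⟨⟩
    rw [hφ]
    refine Submodule.sum_mem _ fun i _ => ?_
    have := hpiece_mul (hx i) (monomial_mem_hpiece (E i) 1)
    rwa [hEdeg, show e - G.deg 0 i + G.deg 0 i = e - 0 by ring] at this
  have hEI : ∀ i, (monomial (E i) 1 : PolyS (a + N)) ∈ varIdeal Y ^ k := by
    intro i
    rw [mem_varIdeal_pow]
    intro s hs
    rw [coeff_monomial] at hs
    split_ifs at hs with h
    · rw [← h, hEk]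
    · exact absurd rfl hs
  have hφI : ∀ v, φ v () ∈ varIdeal Y ^ k := by
    intro v
    rw [hφ]
    exact Ideal.sum_mem _ fun i _ => Ideal.mul_mem_left _ _ (hEI i)
  -- Modulo `(y)^(k+1)`, the kernel of `φ` on `W` is `(y)W`.
  have key : ∀ v ∈ W, φ v ∈ toV (varIdeal Y ^ (k + 1)) ↔ v ∈ varIdeal Y • W := by
    intro v hv
    constructor
    · intro h
      rw [mem_toV, hφ] at h
      exact mem_smul_range_bcMap (G.d 0) hv (mem_of_sum_monomial_mem hEk hEinj h)
    · intro h
      refine Submodule.smul_induction_on h (fun r hr n _ => ?_) (fun u w hu hw => ?_)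
      · rw [map_smul, mem_toV, pow_succ']
        exact Ideal.mul_mem_mul hr (hφI n)
      · rw [map_add]
        exact Submodule.add_mem _ hu hw
  obtain ⟨D₁, hI, hD₁, hD₁'⟩ := hasRes_varIdeal_pow Y (k + 1)
  rw [card_yVars] at hD₁'
  have hD₁e : ∀ i, ∀ p ∈ D₁ i, p = (k : ℤ) + 1 + i := by
    intro i p hp
    have : p = ((k + 1 : ℕ) : ℤ) + i := hD₁ i hp
    rw [this]
    push_cast
    ring
  have hres := hI.ext (hWY.map φ hφgr _ key) (by
    intro i p hp q hq
    have h1 := hD'.low _ q hq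
    rw [hD₁e i p hp]
    push_cast at h1
    omega)
  refine ⟨(W.map φ ⊔ toV (varIdeal Y ^ (k + 1))).map (LinearMap.proj ()), ?_, ?_,
    fun i => D₁ i ∪ D' i, ?_, ?_⟩
  · intro p hp
    exact ⟨fun _ => p, Submodule.mem_sup_right hp, rfl⟩
  · rintro _ ⟨v, hv, rfl⟩
    obtain ⟨_, ⟨u, hu, rfl⟩, w, hw, rfl⟩ := Submodule.mem_sup.1 hv
    exact Ideal.add_mem _ (hφI u) (Ideal.pow_le_pow_right (Nat.le_succ k) hw)
  · have hto : toV ((W.map φ ⊔ toV (varIdeal Y ^ (k + 1))).map (LinearMap.proj ())) =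
        W.map φ ⊔ toV (varIdeal Y ^ (k + 1)) := by
      ext v
      constructor
      · rintro ⟨w, hw, hwv⟩
        have : w = v := funext fun _ => hwv
        rwa [← this]
      · intro hv
        exact ⟨v, hv, rfl⟩
    rw [hto]
    exact hres
  · -- The generators of `(y)^(k+1)` have the least possible degrees, so the top degrees are those
    -- of `W/(y)W`.
    constructor
    · intro i hi
      have h1 := hD'.top i hi
      refine ⟨Or.inr h1.1, ?_⟩
      rintro p (hp | hp)
      · rw [hD₁e i p hp]
        exact hD'.low i _ h1.1
      · exact h1.2 hp
    · intro i hi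
      rw [hD₁' i (by omega), hD'.empty i hi, Set.union_empty]
    · rintro i p (hp | hp)
      · exact (hD₁e i p hp).ge
      · exact hD'.low i p hp

/-! ### Minimal free resolutions in coordinates -/

theorem mem_mIdeal {m : ℕ} {p : PolyS m} : p ∈ mIdeal m ↔ constantCoeff p = 0 := by
  have h : mIdeal m = varIdeal (Finset.univ : Finset (Fin m)) := by
    rw [mIdeal, varIdeal, Finset.coe_univ, Set.image_univ]
  rw [h, ← pow_one (varIdeal _), mem_varIdeal_pow]
  constructor
  · intro h
    by_contra h0
    have := h 0 h0
    simp at this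
  · intro h s hs
    by_contra hlt
    have hs0 : s = 0 := Finsupp.ext fun j =>
      Finset.sum_eq_zero_iff.1 (by omega : ∑ i, s i = 0) j (Finset.mem_univ j)
    rw [hs0] at hs
    exact hs h

/-- Membership in `𝔪F` in terms of coordinates. -/
theorem mem_mIdeal_smul_top {m : ℕ} {F ι : Type} [AddCommGroup F] [Module (PolyS m) F] [Finite ι]
    (L : F ≃ₗ[PolyS m] (ι → PolyS m)) (x : F) :
    x ∈ mIdeal m • (⊤ : Submodule (PolyS m) F) ↔ ∀ a, constantCoeff (L x a) = 0 := by
  classical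
  have := Fintype.ofFinite ι
  constructor
  · intro h a
    refine Submodule.smul_induction_on h (fun r hr n _ => ?_) (fun u w hu hw => ?_)
    · rw [map_smul, Pi.smul_apply, smul_eq_mul, map_mul, mem_mIdeal.1 hr, zero_mul]
    · rw [map_add, Pi.add_apply]
      exact constantCoeff_add_eq_zero hu hw
  · intro h
    have hx : x = L.symm (L x) := (L.symm_apply_apply x).symm
    rw [hx, pi_eq_sum_univ (L x), map_sum]
    refine Submodule.sum_mem _ fun a _ => ?_
    rw [map_smul]
    exact Submodule.smul_mem_smul (mem_mIdeal.2 (h a)) Submodule.mem_top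

/-- Indices of the basis of `⊕_j S(-j)^{b j}`. -/
abbrev FreeIdx (b : ℤ → ℕ) (hb : (Function.support b).Finite) : Type :=
  Σ j : hb.toFinset, Fin (b j)

/-- Degrees of the basis vectors of `⊕_j S(-j)^{b j}`. -/
def idxDeg {b : ℤ → ℕ} {hb : (Function.support b).Finite} (a : FreeIdx b hb) : ℤ := a.1

theorem range_idxDeg {b : ℤ → ℕ} (hb : (Function.support b).Finite) :
    Set.range (idxDeg (hb := hb)) = Function.support b := by
  ext j
  constructor
  · rintro ⟨⟨j, i⟩, rfl⟩
    exact hb.mem_toFinset.1 j.2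
  · intro hj
    exact ⟨⟨⟨j, hb.mem_toFinset.2 hj⟩, ⟨0, Nat.pos_of_ne_zero hj⟩⟩, rfl⟩

/-- Coordinates on `⊕_j S(-j)^{b j}`. -/
def coordE (m : ℕ) (b : ℤ → ℕ) (hb : (Function.support b).Finite) :
    FreeMod m b ≃ₗ[PolyS m] (FreeIdx b hb → PolyS m) :=
  LinearEquiv.ofBijective
    ({ toFun := fun x a => x a.1 a.2
       map_add' := fun _ _ => rfl
       map_smul' := fun _ _ => rfl } : FreeMod m b →ₗ[PolyS m] (FreeIdx b hb → PolyS m)) (by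
    constructor
    · intro x y h
      refine DFinsupp.ext fun j => funext fun i => ?_
      have hj : j ∈ hb.toFinset := hb.mem_toFinset.2 fun h0 => by
        have := i.2
        omega
      exact congrFun h ⟨⟨j, hj⟩, i⟩
    · intro v
      let w : (j : (hb.toFinset : Set ℤ)) → Fin (b j) → PolyS m := fun j i => v ⟨j, i⟩
      refine ⟨(DFinsupp.mk hb.toFinset w : FreeMod m b), funext fun a => ?_⟩
      have h : (DFinsupp.mk hb.toFinset w : FreeMod m b) a.1 = w a.1 := DFinsupp.mk_of_mem a.1.2
      exact congrFun h a.2)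

theorem mem_freePiece {m : ℕ} {b : ℤ → ℕ} (hb : (Function.support b).Finite) {e : ℤ}
    {x : FreeMod m b} : x ∈ freePiece m b e ↔ Homog idxDeg e (coordE m b hb x) := by
  constructor
  · intro h a
    exact h a.1 a.2
  · intro h j i
    have hj : j ∈ hb.toFinset := hb.mem_toFinset.2 fun h0 => by
      have := i.2
      omega
    exact h ⟨⟨j, hj⟩, i⟩

/-- The complex underlying a minimal free resolution, in coordinates. -/
def MinFreeRes.toGC {m : ℕ} {M : Type} [AddCommGroup M] [Module ℂ M] [Module (PolyS m) M]
    [IsScalarTower ℂ (PolyS m) M] {gM : GradedSMod m M} (F : MinFreeRes m M gM) : GC m where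
  ι i := FreeIdx (F.b i) (F.bfin i)
  fin i := inferInstance
  deg i := idxDeg
  d i := (coordE m (F.b i) (F.bfin i)).toLinearMap ∘ₗ F.diff i ∘ₗ
    (coordE m (F.b (i + 1)) (F.bfin (i + 1))).symm.toLinearMap
  gr i e x hx := by
    refine (mem_freePiece (F.bfin i)).1 (F.graded_diff i e _ ((mem_freePiece (F.bfin (i + 1))).2 ?_))
    simpa using hx
  exact i x := by
    have h := F.exact i
    constructor
    · intro hx
      have h1 : (coordE m (F.b (i + 1)) (F.bfin (i + 1))).symm x ∈ LinearMap.ker (F.diff i) := by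
        rw [LinearMap.mem_ker]
        simpa using hx
      rw [h] at h1
      obtain ⟨y, hy⟩ := h1
      refine ⟨coordE m (F.b (i + 1 + 1)) (F.bfin (i + 1 + 1)) y, ?_⟩
      simp [hy]
    · rintro ⟨y, rfl⟩
      have h1 : F.diff (i + 1) ((coordE m (F.b (i + 1 + 1)) (F.bfin (i + 1 + 1))).symm y) ∈
          LinearMap.ker (F.diff i) := by
        rw [h]
        exact ⟨_, rfl⟩
      rw [LinearMap.mem_ker] at h1
      simp [h1]

theorem MinFreeRes.toGC_min {m : ℕ} {M : Type} [AddCommGroup M] [Module ℂ M] [Module (PolyS m) M]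
    [IsScalarTower ℂ (PolyS m) M] {gM : GradedSMod m M} (F : MinFreeRes m M gM) :
    F.toGC.MinFrom 0 := fun i _ _ => (mem_mIdeal_smul_top (coordE m (F.b i) (F.bfin i)) _).1
  (F.minimal i _)

theorem MinFreeRes.range_deg {m : ℕ} {M : Type} [AddCommGroup M] [Module ℂ M] [Module (PolyS m) M]
    [IsScalarTower ℂ (PolyS m) M] {gM : GradedSMod m M} (F : MinFreeRes m M gM) (i : ℕ) :
    Set.range (F.toGC.deg i) = Function.support (F.b i) := range_idxDeg (F.bfin i)

theorem MinFreeRes.card_idx {m : ℕ} {M : Type} [AddCommGroup M] [Module ℂ M] [Module (PolyS m) M]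
    [IsScalarTower ℂ (PolyS m) M] {gM : GradedSMod m M} (F : MinFreeRes m M gM) (i : ℕ) :
    Nat.card (F.toGC.ι i) = ∑ᶠ j : ℤ, F.b i j := by
  change Nat.card (FreeIdx (F.b i) (F.bfin i)) = _
  rw [finsum_eq_sum_of_support_subset (s := (F.bfin i).toFinset) _ (by simp),
    Nat.card_eq_fintype_card, Fintype.card_sigma]
  simp only [Fintype.card_fin]
  exact Finset.sum_coe_sort (F.bfin i).toFinset (F.b i)

/-- In a minimal complex the least degree of a generator increases in each step. -/
theorem GC.MinFrom.le_deg {m : ℕ} {G : GC m} (h : G.MinFrom 0) {k : ℤ} (hk : ∀ a, k ≤ G.deg 0 a) :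
    ∀ i a, k + i ≤ G.deg i a := by
  classical
  intro i
  induction i with
  | zero => simpa using hk
  | succ i ih =>
    intro a
    have h1 : G.d i (Pi.single a 1) ≠ 0 := by
      intro h0
      obtain ⟨y, hy⟩ := (G.exact i _).1 h0
      have h2 := h (i + 1) (Nat.zero_le _) y a
      rw [hy] at h2
      simp at h2
    obtain ⟨b, hb⟩ : ∃ b, G.d i (Pi.single a 1) b ≠ 0 := by
      by_contra hcon
      push Not at hcon
      exact h1 (funext hcon)
    have h3 := G.gr i _ _ (homog_single (δ := G.deg (i + 1)) a (one_mem_hpiece (m := m))) b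
    rw [zero_add] at h3
    have h4 := h i (Nat.zero_le _) (Pi.single a 1) b
    obtain ⟨s, hs⟩ := MvPolynomial.ne_zero_iff.1 hb
    have h5 := mem_hpiece.1 h3 s hs
    have h6 : s.degree ≠ 0 := by
      intro hs0
      rw [Finsupp.degree_eq_zero_iff] at hs0
      rw [hs0] at hs
      exact hs h4
    have := ih b
    push_cast
    omega

/-- A graded free module on a finite basis with degrees `δ`, in the form `⊕_j S(-j)^{b j}`. -/
theorem exists_freeMod_equiv {m : ℕ} {ι : Type} [Finite ι] (δ : ι → ℤ) :
    ∃ b : ℤ → ℕ, Function.support b = Set.range δ ∧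
      ∃ L : FreeMod m b ≃ₗ[PolyS m] (ι → PolyS m),
        ∀ e x, x ∈ freePiece m b e ↔ Homog δ e (L x) := by
  classical
  let b : ℤ → ℕ := fun j => Nat.card {a // δ a = j}
  have hsupp : Function.support b = Set.range δ := by
    ext j
    rw [Function.mem_support, ← Nat.pos_iff_ne_zero, Nat.card_pos_iff]
    constructor
    · rintro ⟨⟨a, ha⟩, -⟩
      exact ⟨a, ha⟩
    · rintro ⟨a, ha⟩
      exact ⟨⟨a, ha⟩, inferInstance⟩
  have hb : (Function.support b).Finite := hsupp ▸ Set.finite_range δ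
  let e : ∀ j, Fin (b j) ≃ {a // δ a = j} := fun j => (Finite.equivFin _).symm
  let g : FreeIdx b hb → ι := fun a => (e a.1 a.2).1
  have hgδ : ∀ a, δ (g a) = idxDeg a := fun a => (e a.1 a.2).2
  have hg : Function.Bijective g := by
    constructor
    · rintro ⟨⟨j, hj⟩, i⟩ ⟨⟨j', hj'⟩, i'⟩ h
      have h1 : j = j' := by
        have h2 := hgδ ⟨⟨j, hj⟩, i⟩
        rw [h, hgδ] at h2
        exact h2.symm
      subst h1
      have h2 : i = i' := (e j).injective (Subtype.ext h)
      rw [h2]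
    · intro a
      have hj : δ a ∈ hb.toFinset := by
        rw [hb.mem_toFinset, hsupp]
        exact ⟨a, rfl⟩
      refine ⟨⟨⟨δ a, hj⟩, (e (δ a)).symm ⟨a, rfl⟩⟩, ?_⟩
      simp [g]
  let E := Equiv.ofBijective g hg
  refine ⟨b, hsupp, (coordE m b hb).trans
    (LinearEquiv.funCongrLeft (PolyS m) (PolyS m) E.symm), fun z x => ?_⟩
  rw [mem_freePiece hb]
  have hL : ∀ a, ((coordE m b hb).trans (LinearEquiv.funCongrLeft (PolyS m) (PolyS m) E.symm)) x a =
      coordE m b hb x (E.symm a) := fun _ => rfl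
  constructor
  · intro h a
    rw [hL]
    have h1 := h (E.symm a)
    rwa [← hgδ, show g (E.symm a) = a from E.apply_symm_apply a] at h1
  · intro h a
    have h1 := h (E a)
    rw [hL, E.symm_apply_apply] at h1
    rwa [show δ (E a) = idxDeg a from hgδ a] at h1

/-- The grading of a homogeneous ideal. -/
def idealGrading {m : ℕ} (J : Ideal (PolyS m)) (hJ : ∀ p ∈ J, ∀ z, hcomp m z p ∈ J) :
    GradedSMod m J where
  piece j := (hpiece m j).comap (J.subtype.restrictScalars ℂ)
  internal := by
    rw [DirectSum.isInternal_submodule_iff_iSupIndep_and_iSup_eq_top]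
    constructor
    · rw [iSupIndep_def]
      intro z
      rw [Submodule.disjoint_def]
      intro x hx hx'
      have h1 : (⨆ (j) (_ : j ≠ z), (hpiece m j).comap (J.subtype.restrictScalars ℂ)) ≤
          LinearMap.ker (hcomp m z ∘ₗ J.subtype.restrictScalars ℂ) := by
        refine iSup₂_le fun j hj y hy => ?_
        rw [LinearMap.mem_ker, LinearMap.comp_apply, hcomp_of_mem hy, if_neg hj]
      have h2 : hcomp m z (x : PolyS m) = 0 := h1 hx'
      have hx2 : (x : PolyS m) ∈ hpiece m z := hx
      have h3 : hcomp m z (x : PolyS m) = x := by rw [hcomp_of_mem hx2, if_pos rfl]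
      exact Subtype.ext (h3.symm.trans h2)
    · rw [eq_top_iff]
      rintro ⟨p, hp⟩ -
      let A : Finset ℤ := p.support.image fun s => (s.degree : ℤ)
      have h1 : (⟨p, hp⟩ : J) = ∑ z ∈ A, ⟨hcomp m z p, hJ p hp z⟩ := by
        refine Subtype.ext ?_
        rw [AddSubmonoidClass.coe_finsetSum]
        ext s
        rw [coeff_sum]
        simp only [coeff_hcomp]
        rw [Finset.sum_ite_eq]
        split_ifs with hs
        · rfl
        · by_contra hne
          exact hs (Finset.mem_image_of_mem _ (by simpa using hne))
      rw [h1]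
      refine Submodule.sum_mem _ fun z _ => Submodule.mem_iSup_of_mem z ?_
      exact hcomp_mem z p
  smul_mem d p hp j x hx := by
    have h1 : p ∈ hpiece m d := by
      unfold hpiece
      rw [if_pos (by omega)]
      exact hp
    exact hpiece_mul h1 hx

/-- A resolution of an ideal in coordinates gives a minimal free resolution. -/
theorem HasRes.exists_minFreeRes {m : ℕ} {J : Ideal (PolyS m)} {D : ℕ → Set ℤ}
    (h : HasRes (fun _ : Unit => 0) (toV J) ⊥ D) :
    ∃ gJ : GradedSMod m J, NatIdealGrading m J gJ ∧ ∃ F : MinFreeRes m J gJ,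
      ∀ i, Function.support (F.b i) = D i := by
  obtain ⟨G, ε, hmin, hgr, hA, hB, hD⟩ := h
  rw [sup_bot_eq] at hA
  have hJ : ∀ p ∈ J, ∀ z, hcomp m z p ∈ J := by
    intro p hp z
    have h1 : (fun _ => p : Unit → PolyS m) ∈ toV J := hp
    rw [← hA] at h1
    obtain ⟨x, hx⟩ := h1
    have h2 := hgr.vcomp_comm z x
    have h3 : ε (vcomp (G.deg 0) z x) ∈ toV J := hA ▸ ⟨_, rfl⟩
    rw [← h2, hx, mem_toV, vcomp_apply, sub_zero] at h3
    exact h3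
  have hL := fun i => exists_freeMod_equiv (m := m) (G.deg i)
  choose b hb L hLgr using hL
  have hεJ : ∀ x, ε x () ∈ J := fun x => by
    have : ε x ∈ toV J := hA ▸ ⟨x, rfl⟩
    exact this
  let F : MinFreeRes m J (idealGrading J hJ) :=
    { b := b
      bfin := fun i => by rw [hb]; exact Set.finite_range _
      diff := fun i => (L i).symm.toLinearMap ∘ₗ G.d i ∘ₗ (L (i + 1)).toLinearMap
      aug := LinearMap.codRestrict J (LinearMap.proj () ∘ₗ ε ∘ₗ (L 0).toLinearMap)
        fun x => hεJ _
      aug_surjective := by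
        rintro ⟨p, hp⟩
        have h1 : (fun _ => p : Unit → PolyS m) ∈ toV J := hp
        rw [← hA] at h1
        obtain ⟨x, hx⟩ := h1
        refine ⟨(L 0).symm x, Subtype.ext ?_⟩
        change ε (L 0 ((L 0).symm x)) () = p
        rw [LinearEquiv.apply_symm_apply, hx]
      exact_aug := by
        ext x
        have h1 : x ∈ LinearMap.ker (LinearMap.codRestrict J
            (LinearMap.proj () ∘ₗ ε ∘ₗ (L 0).toLinearMap) fun x => hεJ _) ↔
            ε (L 0 x) ∈ (⊥ : Submodule (PolyS m) (Unit → PolyS m)) := by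
          rw [LinearMap.mem_ker, Submodule.mem_bot]
          constructor
          · intro h
            exact funext fun _ => congrArg Subtype.val h
          · intro h
            exact Subtype.ext (congrFun h ())
        rw [h1, hB]
        constructor
        · rintro ⟨y, hy⟩
          refine ⟨(L 1).symm y, ?_⟩
          change (L 0).symm (G.d 0 (L 1 ((L 1).symm y))) = x
          rw [LinearEquiv.apply_symm_apply, hy, LinearEquiv.symm_apply_apply]
        · rintro ⟨y, rfl⟩
          refine ⟨L 1 y, ?_⟩
          exact ((L 0).apply_symm_apply _).symm
      exact := fun i => by
        ext x
        have h1 : x ∈ LinearMap.ker ((L i).symm.toLinearMap ∘ₗ G.d i ∘ₗ (L (i + 1)).toLinearMap) ↔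
            G.d i (L (i + 1) x) = 0 := by
          rw [LinearMap.mem_ker]
          exact (L i).symm.map_eq_zero_iff
        rw [h1, G.exact]
        constructor
        · rintro ⟨y, hy⟩
          refine ⟨(L (i + 1 + 1)).symm y, ?_⟩
          change (L (i + 1)).symm (G.d (i + 1) (L (i + 1 + 1) ((L (i + 1 + 1)).symm y))) = x
          rw [LinearEquiv.apply_symm_apply, hy, LinearEquiv.symm_apply_apply]
        · rintro ⟨y, rfl⟩
          refine ⟨L (i + 1 + 1) y, ?_⟩
          exact ((L (i + 1)).apply_symm_apply _).symm
      graded_diff := fun i e x hx => by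
        rw [hLgr] at hx ⊢
        have h1 := G.gr i _ _ hx
        rwa [← (L i).apply_symm_apply (G.d i (L (i + 1) x))] at h1
      graded_aug := fun e x hx => by
        rw [hLgr] at hx
        have h1 := hgr _ _ hx ()
        rw [sub_zero] at h1
        exact h1
      minimal := fun i x => by
        rw [mem_mIdeal_smul_top (L i)]
        intro a
        have h1 := hmin i (Nat.zero_le _) (L (i + 1) x) a
        rwa [← (L i).apply_symm_apply (G.d i (L (i + 1) x))] at h1 }
  refine ⟨idealGrading J hJ, fun _ _ => Iff.rfl, F, fun i => ?_⟩
  rw [← hD i]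
  exact hb i

/-! ### Maximal degrees and regularity -/

theorem isGreatest_tmax {b : ℤ → ℕ} (hb : (Function.support b).Finite) (h0 : b ≠ 0) :
    IsGreatest (Function.support b) (tmax b) := by
  have h1 : (Function.support b).Nonempty := Function.support_nonempty_iff.2 h0
  exact ⟨h1.csSup_mem hb, fun j hj => le_csSup hb.bddAbove hj⟩

theorem tmax_eq {b : ℤ → ℕ} {s : ℤ} (h : IsGreatest (Function.support b) s) : tmax b = s :=
  h.csSup_eq

/-- When the maximal degrees increase strictly, the regularity is attained at the last step. -/
theorem regOf_eq {b : ℕ → ℤ → ℕ} {s : ℕ → ℤ} {l : ℕ}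
    (h : ∀ i ≤ l, IsGreatest (Function.support (b i)) (s i)) (h0 : ∀ i, l < i → b i = 0)
    (hs : ∀ i < l, s i + 1 ≤ s (i + 1)) : regOf b = s l - l := by
  have h1 : ∀ d i, i + d = l → s i - i ≤ s l - l := by
    intro d
    induction d with
    | zero =>
      intro i hi
      rw [show i = l by omega]
    | succ d ih =>
      intro i hi
      have h2 := ih (i + 1) (by omega)
      have h3 := hs i (by omega)
      push_cast at h2
      omega
  refine IsGreatest.csSup_eq ⟨⟨l, s l, (h l le_rfl).1, rfl⟩, ?_⟩
  rintro z ⟨i, j, hij, rfl⟩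
  have hi : i ≤ l := by
    by_contra hcon
    rw [h0 i (by omega)] at hij
    exact hij rfl
  have h2 := (h i hi).2 hij
  have h3 := h1 (l - i) i (by omega)
  omega

theorem yIdeal_eq (n N : ℕ) : yIdeal n N = varIdeal (yVars (n + 1) N) := by
  unfold yIdeal varIdeal
  congr 1
  ext p
  simp [mem_yVars, eq_comm]

/-- **Main Theorem.** Let `S = ℂ[x_0,…,x_n,y_1,…,y_N]`, `I = (y_1,…,y_N)`,
`R = S/I = ℂ[x_0,…,x_n]`. Let `M` be a finitely generated graded `R`-module generated in
positive degrees, with strictly increasing maximal degree sequence `(t_0,…,t_r)`,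
`r ≤ n+1`, minimal generator degree `k`, and `Σ_j β^R_{0,j}(M) ≤ (k+N-1 choose k)`. Then
there is a homogeneous ideal `J ⊆ S` with `I^{k+1} ⊆ J ⊆ I^k`, `√J = I`, whose maximal
degree sequence over `S` is `(t_1,…,t_r, t_r+1,…,t_r+N)`; in particular
`reg_S J = reg_R M + 1`. -/
theorem stmt10 (n N k r : ℕ) (hN : 0 < N) (hr1 : 1 ≤ r) (hrn : r ≤ n + 1)
    (M : Type) [AddCommGroup M] [Module ℂ M]
    [Module (PolyS (n + 1)) M] [IsScalarTower ℂ (PolyS (n + 1)) M]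
    (gM : GradedSMod (n + 1) M) (FM : MinFreeRes (n + 1) M gM)
    (hpos : ∀ j : ℤ, FM.b 0 j ≠ 0 → 0 < j)
    (hkmin : FM.b 0 (k : ℤ) ≠ 0 ∧ ∀ j : ℤ, FM.b 0 j ≠ 0 → (k : ℤ) ≤ j)
    (hlen : ∀ i, r < i → FM.b i = 0)
    (hcols : ∀ i, i ≤ r → FM.b i ≠ 0)
    (hinc : ∀ i, i < r → tmax (FM.b i) < tmax (FM.b (i + 1)))
    (hsum : ∑ᶠ j : ℤ, FM.b 0 j ≤ (k + N - 1).choose k) :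
    ∃ J : Ideal (PolyS (n + 1 + N)),
      (yIdeal n N) ^ (k + 1) ≤ J ∧ J ≤ (yIdeal n N) ^ k ∧
      J.radical = yIdeal n N ∧
      ∃ (gJ : GradedSMod (n + 1 + N) ↥J), NatIdealGrading (n + 1 + N) J gJ ∧
        ∃ F : MinFreeRes (n + 1 + N) ↥J gJ,
          (∀ i, i < r → tmax (F.b i) = tmax (FM.b (i + 1))) ∧
          (∀ q : ℕ, 1 ≤ q → q ≤ N → tmax (F.b (r - 1 + q)) = tmax (FM.b r) + q) ∧
          (∀ i, r + N ≤ i → F.b i = 0) ∧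
          (∀ i, i < r + N → F.b i ≠ 0) ∧
          regOf F.b = regOf FM.b + 1 := by
  have hk0 : k ≠ 0 := by
    have := hpos k hkmin.1
    omega
  obtain ⟨L, rfl⟩ : ∃ L, r = L + 1 := ⟨r - 1, by omega⟩
  have htop : ∀ i ≤ L + 1, IsGreatest (Function.support (FM.b i)) (tmax (FM.b i)) :=
    fun i hi => isGreatest_tmax (FM.bfin i) (hcols i hi)
  -- The expected maximal degrees of `J`, continued past the last step in steps of one.
  let t : ℕ → ℤ := fun i =>
    if i ≤ L then tmax (FM.b (i + 1)) else tmax (FM.b (L + 1)) + ((i : ℤ) - L)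
  have ht1 : ∀ i ≤ L, t i = tmax (FM.b (i + 1)) := fun i hi => if_pos hi
  have ht2 : ∀ i, L ≤ i → t i = tmax (FM.b (L + 1)) + ((i : ℤ) - L) := by
    intro i hi
    rcases hi.eq_or_lt with rfl | h
    · rw [ht1 _ le_rfl]
      omega
    · exact if_neg (by omega)
  have htL : ∀ i, L ≤ i → t (i + 1) = t i + 1 := by
    intro i hi
    rw [ht2 i hi, ht2 (i + 1) (by omega)]
    push_cast
    ring
  have ht : ∀ i, t i + 1 ≤ t (i + 1) := by
    intro i
    rcases lt_or_ge i L with h | h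
    · rw [ht1 i h.le, ht1 (i + 1) h]
      exact hinc (i + 1) (by omega)
    · exact (htL i h).ge
  have hdeg : ∀ a, (k : ℤ) ≤ FM.toGC.deg 0 a := fun a => hkmin.2 _ (by
    have h1 : FM.toGC.deg 0 a ∈ Set.range (FM.toGC.deg 0) := ⟨a, rfl⟩
    rw [FM.range_deg] at h1
    exact h1)
  have hD : TopSeq (fun i => Set.range (FM.toGC.deg (i + 1))) (L + 1) t (k + 1) := by
    refine ⟨fun i hi => ?_, fun i hi => ?_, fun i => ?_⟩
    · rw [FM.range_deg, ht1 i (by omega)]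
      exact htop (i + 1) (by omega)
    · rw [FM.range_deg, hlen (i + 1) (by omega)]
      exact Function.support_zero
    · rintro _ ⟨a, rfl⟩
      have h1 := FM.toGC_min.le_deg hdeg (i + 1) a
      push_cast at h1
      omega
  obtain ⟨J, hJ1, hJ2, D, hres, hDJ⟩ := exists_ideal (N := N) (Nat.succ_pos n) FM.toGC FM.toGC_min
    (by rw [FM.card_idx]; exact hsum) hdeg hD ht htL
  obtain ⟨gJ, hgJ, F, hF⟩ := hres.exists_minFreeRes
  have hFtop : ∀ i < L + N + 1, IsGreatest (Function.support (F.b i)) (t i) := fun i hi => by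
    rw [hF]
    exact hDJ.top i hi
  have hFzero : ∀ i, L + N + 1 ≤ i → F.b i = 0 := fun i hi => by
    rw [← Function.support_eq_empty_iff, hF]
    exact hDJ.empty i hi
  rw [yIdeal_eq]
  have hprime := isPrime_varIdeal_yVars (n + 1) N
  refine ⟨J, hJ1, hJ2, le_antisymm ?_ ?_, gJ, hgJ, F, ?_, ?_, ?_, ?_, ?_⟩
  · exact hprime.isRadical.radical_le_iff.2 (hJ2.trans (Ideal.pow_le_self hk0))
  · exact fun x hx => ⟨k + 1, hJ1 (Ideal.pow_mem_pow hx (k + 1))⟩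
  · intro i hi
    rw [tmax_eq (hFtop i (by omega)), ht1 i (by omega)]
  · intro q hq1 hq
    rw [Nat.add_sub_cancel, tmax_eq (hFtop (L + q) (by omega)), ht2 _ (by omega)]
    push_cast
    ring
  · exact fun i hi => hFzero i (by omega)
  · exact fun i hi => Function.support_nonempty_iff.1 ⟨_, (hFtop i (by omega)).1⟩
  · rw [regOf_eq (l := L + N) (fun i hi => hFtop i (by omega)) (fun i hi => hFzero i hi)
        (fun i _ => ht i),
      regOf_eq (l := L + 1) htop hlen (fun i hi => hinc i hi), ht2 _ (by omega)]
    push_cast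
    ring
end
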